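/- arXiv:2509.04271 — 3 statements merged into one kernel-verified Lean document; each statement's English description precedes it below -/
import Mathlib

section
/- For every integer d ≥ 0 and all α, ε ∈ (0,1) there is a constant C = C(d,α,ε) such that the following holds. Let G be a finite group and A ⊆ G a nonempty set with max(VC^ℓ_A(A), VC^r_A(A)) ≤ d and |A| ≥ α|G|. Then there is a (δ,m,n)-Bohr neighborhood B in G with max{1/δ, m, n} ≤ C and B ⊆ St^r_ε(A) satisfying: (i) there is a set F ⊆ A with |F| ≤ C such that |A △ FB| < ε|A|; and (ii) |Z^ℓ_ε(A,B)| ≤ ε|A|. -/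
open scoped Pointwise symmDiff

/-- `Stab^ℓ_N(A) = {x : |xA △ A| ≤ N}`. -/
def stabL {G : Type*} [Group G] (A : Set G) (N : ℝ) : Set G :=
  {x : G | (((x • A) ∆ A).ncard : ℝ) ≤ N}

/-- `Stab^r_N(A) = {x : |Ax △ A| ≤ N}`. -/
def stabR {G : Type*} [Group G] (A : Set G) (N : ℝ) : Set G :=
  {x : G | (((A * {x}) ∆ A).ncard : ℝ) ≤ N}

/-- `St^ℓ_ε(A) = Stab^ℓ_{ε|A|}(A)`. -/
def stL {G : Type*} [Group G] (A : Set G) (ε : ℝ) : Set G := stabL A (ε * A.ncard)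

/-- `St^r_ε(A) = Stab^r_{ε|A|}(A)`. -/
def stR {G : Type*} [Group G] (A : Set G) (ε : ℝ) : Set G := stabR A (ε * A.ncard)

/-- A family of sets shatters `S` if every subset of `S` is cut out by a member of the family. -/
def Shatters {α : Type*} (F : Set (Set α)) (S : Set α) : Prop :=
  ∀ T ⊆ S, ∃ f ∈ F, S ∩ f = T

/-- VC-dimension of a set system: the supremum of cardinalities of finite shattered sets. -/
noncomputable def vcDim {α : Type*} (F : Set (Set α)) : ℕ∞ :=
  ⨆ (S : Finset α) (_ : Shatters F ↑S), (S.card : ℕ∞)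

/-- The family of left translates `{xA : x ∈ B}`. -/
def leftFam {G : Type*} [Group G] (A B : Set G) : Set (Set G) := (fun x => x • A) '' B

/-- The family of right translates `{Ax : x ∈ B}`. -/
def rightFam {G : Type*} [Group G] (A B : Set G) : Set (Set G) := (fun x => A * {x}) '' B

/-- `Z^ℓ_ε(A,X) = {g : min(|gX ∩ A|, |gX \ A|) ≥ ε|X|}`. -/
def Zl {G : Type*} [Group G] (A X : Set G) (ε : ℝ) : Set G :=
  {g : G | ε * X.ncard ≤ min (((g • X) ∩ A).ncard : ℝ) (((g • X) \ A).ncard : ℝ)}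

/-- The distance on the unitary group `U(m)` induced by the `L²`-operator norm on matrices. -/
noncomputable def uDist (m : ℕ) (u v : Matrix.unitaryGroup (Fin m) ℂ) : ℝ :=
  ‖Matrix.toEuclideanCLM (𝕜 := ℂ) (n := Fin m)
      ((u : Matrix (Fin m) (Fin m) ℂ) - (v : Matrix (Fin m) (Fin m) ℂ))‖

/-- A `(δ,m,n)`-Bohr neighborhood in `G`: `B = τ⁻¹(U ∩ K)` where `τ : G → U(m)` is a
homomorphism, `U` is the open ball of radius `δ` around the identity (operator-norm metric),
and `K` is a normal subgroup of `τ(G)` of index `n` consisting of diagonal matrices. -/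
def IsBohrNbhd {G : Type*} [Group G] (δ : ℝ) (m n : ℕ) (B : Set G) : Prop :=
  ∃ (τ : G →* Matrix.unitaryGroup (Fin m) ℂ)
    (K : Subgroup (Matrix.unitaryGroup (Fin m) ℂ)),
    K ≤ τ.range ∧ (K.subgroupOf τ.range).Normal ∧ (K.subgroupOf τ.range).index = n ∧
    (∀ u ∈ K, Matrix.IsDiag (u : Matrix (Fin m) (Fin m) ℂ)) ∧
    B = {g : G | τ g ∈ K ∧ uDist m (τ g) 1 < δ}

section Jordan
open Matrix
open scoped Matrix.Norms.L2Operator InnerProductSpace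

theorem joint_onb {E n : Type*} [NormedAddCommGroup E] [InnerProductSpace ℂ E]
    [FiniteDimensional ℂ E] {m : ℕ} (hm : Module.finrank ℂ E = m) (T : n → Module.End ℂ E)
    (hT : ∀ i, (T i).IsSymmetric) (hC : Pairwise (Function.onFun Commute T)) :
    ∃ b : OrthonormalBasis (Fin m) ℂ E, ∀ a j, ∃ c : ℂ, T j (b a) = c • b a := by
  classical
  let V : (n → ℂ) → Submodule ℂ E := fun α => ⨅ j, Module.End.eigenspace (T j) (α j)
  have hV : OrthogonalFamily ℂ (fun α => V α) fun α => (V α).subtypeₗᵢ :=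
    LinearMap.IsSymmetric.orthogonalFamily_iInf_eigenspaces hT
  have htop : ⨆ α, V α = ⊤ := LinearMap.IsSymmetric.iSup_iInf_eq_top_of_commute hT hC
  have hfin : {α | V α ≠ ⊥}.Finite := WellFoundedGT.finite_ne_bot_of_iSupIndep hV.independent
  let ι := {α // V α ≠ ⊥}
  have : Fintype ι := hfin.fintype
  let W : ι → Submodule ℂ E := fun α => V α
  have hW : OrthogonalFamily ℂ (fun α => W α) fun α => (W α).subtypeₗᵢ :=
    hV.comp Subtype.val_injective
  have hWtop : ⨆ α, W α = ⊤ := by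
    rw [← htop]; exact iSup_ne_bot_subtype V
  have hintern : DirectSum.IsInternal W := by
    rw [OrthogonalFamily.isInternal_iff hW, hWtop, Submodule.top_orthogonal_eq_bot]
  refine ⟨hintern.subordinateOrthonormalBasis hm hW, fun a j => ?_⟩
  have h := hintern.subordinateOrthonormalBasis_subordinate hm a hW
  have h2 := (Submodule.mem_iInf _).1 h j
  exact ⟨_, Module.End.mem_eigenspace_iff.1 h2⟩

theorem simul_diag {m : ℕ} (S : Set (unitaryGroup (Fin m) ℂ))
    (hS : ∀ u ∈ S, ∀ v ∈ S, u * v = v * u) :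
    ∃ P : unitaryGroup (Fin m) ℂ, ∀ u ∈ S,
      IsDiag ((P⁻¹ * u * P : unitaryGroup (Fin m) ℂ) : Matrix (Fin m) (Fin m) ℂ) := by
  classical
  let M : S × Bool → Matrix (Fin m) (Fin m) ℂ := fun p =>
    if p.2 then (p.1.1 : Matrix (Fin m) (Fin m) ℂ) + star (p.1.1 : Matrix (Fin m) (Fin m) ℂ)
    else Complex.I • ((p.1.1 : Matrix (Fin m) (Fin m) ℂ) - star (p.1.1 : Matrix (Fin m) (Fin m) ℂ))
  have hM : ∀ p, (M p).IsHermitian := by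
    rintro ⟨u, b⟩
    cases b
    · simp [M, Matrix.IsHermitian, ← Matrix.star_eq_conjTranspose, smul_sub]
      abel
    · simp [M, Matrix.IsHermitian, ← Matrix.star_eq_conjTranspose, add_comm]
  have hcoe : ∀ u v : unitaryGroup (Fin m) ℂ, u * v = v * u →
      Commute (u : Matrix (Fin m) (Fin m) ℂ) v := by
    intro u v h
    exact congrArg Subtype.val h
  have hinv : ∀ u : unitaryGroup (Fin m) ℂ,
    star (u : Matrix (Fin m) (Fin m) ℂ) = ((u⁻¹ : unitaryGroup (Fin m) ℂ) : Matrix _ _ ℂ) := by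
    intro u; rfl
  have hMC : ∀ p q, Commute (M p) (M q) := by
    rintro ⟨u, b⟩ ⟨v, c⟩
    have huv : Commute u.1 v.1 := hS _ u.2 _ v.2
    have h1 := hcoe _ _ huv
    have h2 := hcoe _ _ huv.inv_right
    have h3 := hcoe _ _ huv.inv_left
    have h4 := hcoe _ _ huv.inv_inv
    rw [← hinv] at h2 h3
    rw [← hinv, ← hinv] at h4
    have hp : ∀ b : Bool, Commute (M (u,b)) v ∧ Commute (M (u,b)) (star (v.1 : Matrix _ _ ℂ)) := by
      intro b
      cases b
      · simp only [M]
        exact ⟨(h1.sub_left h3).smul_left _, (h2.sub_left h4).smul_left _⟩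
      · simp only [M]
        exact ⟨h1.add_left h3, h2.add_left h4⟩
    cases c
    · exact ((hp b).1.sub_right (hp b).2).smul_right _
    · exact (hp b).1.add_right (hp b).2
  let φ := toEuclideanCLM (𝕜 := ℂ) (n := Fin m)
  let T : S × Bool → Module.End ℂ (EuclideanSpace ℂ (Fin m)) := fun p => toEuclideanLin (M p)
  obtain ⟨b, hb⟩ := joint_onb (E := EuclideanSpace ℂ (Fin m)) (m := m) (by simp) T
    (fun p => Matrix.isSymmetric_toEuclideanLin_iff.2 (hM p)) (by
      intro p q _
      ext v i
      have := congrArg (fun X => (X *ᵥ v.ofLp) i) (hMC p q).eq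
      simpa [T, toEuclideanLin, Matrix.toLpLin_apply, Matrix.mulVec_mulVec] using this)
  let Q : Matrix (Fin m) (Fin m) ℂ := (EuclideanSpace.basisFun (Fin m) ℂ).toBasis.toMatrix b
  have hQ : Q ∈ unitaryGroup (Fin m) ℂ :=
    (EuclideanSpace.basisFun (Fin m) ℂ).toMatrix_orthonormalBasis_mem_unitary b
  have hQij : ∀ i j, Q i j = b j i := by
    intro i j; simp [Q, Module.Basis.toMatrix_apply]
  refine ⟨⟨Q, hQ⟩, fun u hu => ?_⟩
  have key : ∃ c : Fin m → ℂ, (u : Matrix (Fin m) (Fin m) ℂ) * Q = Q * diagonal c := by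
    choose c hc using hb
    refine ⟨fun a => (1/2 : ℂ) * (c a (⟨u, hu⟩, true) - Complex.I * c a (⟨u, hu⟩, false)), ?_⟩
    have hu2 : (u : Matrix (Fin m) (Fin m) ℂ) = (1/2 : ℂ) • (M (⟨u, hu⟩, true) - Complex.I • M (⟨u, hu⟩, false)) := by
      simp only [M]
      ext i j
      simp
      ring_nf
      rw [Complex.I_sq]
      ring
    have hp : ∀ p, M p * Q = Q * diagonal (fun a => c a p) := by
      intro p
      ext i a
      have h := congrArg (fun v => v.ofLp i) (hc a p)
      simp only [T, toEuclideanLin, Matrix.toLpLin_apply, Matrix.mulVec, dotProduct] at h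
      rw [Matrix.mul_diagonal, Matrix.mul_apply]
      simp only [hQij]
      rw [h]
      simp [mul_comm]
    rw [hu2, Matrix.smul_mul, Matrix.sub_mul, Matrix.smul_mul, hp, hp]
    ext i j
    simp [Matrix.mul_diagonal]
    ring
  obtain ⟨c, hc⟩ := key
  have : ((⟨Q, hQ⟩⁻¹ * u * ⟨Q, hQ⟩ : unitaryGroup (Fin m) ℂ) : Matrix (Fin m) (Fin m) ℂ) = diagonal c := by
    change star Q * (u : Matrix (Fin m) (Fin m) ℂ) * Q = _
    rw [mul_assoc, hc, ← mul_assoc, (Matrix.mem_unitaryGroup_iff').1 hQ, one_mul]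
  rw [this]
  exact Matrix.isDiag_diagonal c

theorem entry_le_opNorm {m : ℕ} (M : Matrix (Fin m) (Fin m) ℂ) (i j : Fin m) : ‖M i j‖ ≤ ‖M‖ := by
  have h := Matrix.l2_opNorm_mulVec M (EuclideanSpace.single j (1 : ℂ))
  have h2 := PiLp.norm_apply_le (WithLp.toLp 2 (M *ᵥ (EuclideanSpace.single j (1 : ℂ)).ofLp)) i
  simp at h h2
  exact h2.trans h

theorem norm_conj_unitary {m : ℕ} (P u : unitaryGroup (Fin m) ℂ) :
    ‖((P * u * P⁻¹ : unitaryGroup (Fin m) ℂ) : Matrix (Fin m) (Fin m) ℂ) - 1‖ =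
      ‖(u : Matrix (Fin m) (Fin m) ℂ) - 1‖ := by
  have h : ((P * u * P⁻¹ : unitaryGroup (Fin m) ℂ) : Matrix (Fin m) (Fin m) ℂ) - 1 =
      (P : Matrix (Fin m) (Fin m) ℂ) * ((u : Matrix (Fin m) (Fin m) ℂ) - 1) *
        ((P⁻¹ : unitaryGroup (Fin m) ℂ) : Matrix (Fin m) (Fin m) ℂ) := by
    have h1 : ((P * P⁻¹ : unitaryGroup (Fin m) ℂ) : Matrix (Fin m) (Fin m) ℂ) = 1 := by simp
    rw [mul_sub, sub_mul, mul_one]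
    rw [← h1]; rfl
  rw [h, CStarRing.norm_mul_coe_unitary, CStarRing.norm_coe_unitary_mul]

theorem norm_comm_unitary {m : ℕ} (a b : unitaryGroup (Fin m) ℂ) :
    ‖((a * b * a⁻¹ * b⁻¹ : unitaryGroup (Fin m) ℂ) : Matrix (Fin m) (Fin m) ℂ) - 1‖ ≤
      2 * ‖(a : Matrix (Fin m) (Fin m) ℂ) - 1‖ * ‖(b : Matrix (Fin m) (Fin m) ℂ) - 1‖ := by
  set x : Matrix (Fin m) (Fin m) ℂ := (a : Matrix (Fin m) (Fin m) ℂ) - 1 with hx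
  set y : Matrix (Fin m) (Fin m) ℂ := (b : Matrix (Fin m) (Fin m) ℂ) - 1 with hy
  have h : ((a * b * a⁻¹ * b⁻¹ : unitaryGroup (Fin m) ℂ) : Matrix (Fin m) (Fin m) ℂ) - 1 =
      (x * y - y * x) * (((b * a)⁻¹ : unitaryGroup (Fin m) ℂ) : Matrix (Fin m) (Fin m) ℂ) := by
    have h1 : ((b * a * (b * a)⁻¹ : unitaryGroup (Fin m) ℂ) : Matrix (Fin m) (Fin m) ℂ) = 1 := by
      simp
    have h2 : a * b * a⁻¹ * b⁻¹ = a * b * (b * a)⁻¹ := by group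
    have h3 : x * y - y * x = ((a * b : unitaryGroup (Fin m) ℂ) : Matrix (Fin m) (Fin m) ℂ)
        - ((b * a : unitaryGroup (Fin m) ℂ) : Matrix (Fin m) (Fin m) ℂ) := by
      rw [hx, hy]
      push_cast
      noncomm_ring
    rw [h2, h3, sub_mul, ← h1]; rfl
  rw [h, CStarRing.norm_mul_coe_unitary]
  calc ‖x * y - y * x‖ ≤ ‖x * y‖ + ‖y * x‖ := norm_sub_le _ _
    _ ≤ ‖x‖ * ‖y‖ + ‖y‖ * ‖x‖ := add_le_add (norm_mul_le _ _) (norm_mul_le _ _)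
    _ = _ := by ring

theorem commute_of_commute_conj {m : ℕ} (a b : unitaryGroup (Fin m) ℂ)
    (hb : ‖(b : Matrix (Fin m) (Fin m) ℂ) - 1‖ < 1)
    (hab : a * (b * a * b⁻¹) = (b * a * b⁻¹) * a) : a * b = b * a := by
  obtain ⟨P, hP⟩ := simul_diag ({a, b * a * b⁻¹} : Set (unitaryGroup (Fin m) ℂ)) (by
    rintro u (rfl | rfl) v (rfl | rfl) <;> first | rfl | exact hab | exact hab.symm)
  have hA := hP a (by simp)
  have hC := hP (b * a * b⁻¹) (by simp)
  set a' := P⁻¹ * a * P with ha'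
  set c' := P⁻¹ * (b * a * b⁻¹) * P with hc'
  set b' := P⁻¹ * b * P with hb'
  have hbn : ‖(b' : Matrix (Fin m) (Fin m) ℂ) - 1‖ < 1 := by
    have := norm_conj_unitary P⁻¹ b
    rw [inv_inv] at this
    rw [hb', this]; exact hb
  have hcb : c' * b' = b' * a' := by rw [ha', hb', hc']; group
  have hcb2 : (c' : Matrix (Fin m) (Fin m) ℂ) * (b' : Matrix (Fin m) (Fin m) ℂ) =
    (b' : Matrix (Fin m) (Fin m) ℂ) * (a' : Matrix (Fin m) (Fin m) ℂ) := congrArg Subtype.val hcb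
  have hca : c' = a' := by
    apply Subtype.ext
    ext i j
    by_cases hij : i = j
    · subst hij
      have hne : (b' : Matrix (Fin m) (Fin m) ℂ) i i ≠ 0 := by
        intro h0
        have := entry_le_opNorm ((b' : Matrix (Fin m) (Fin m) ℂ) - 1) i i
        simp [h0] at this
        linarith
      have h1 := congrFun (congrFun hcb2 i) i
      rw [← hA.diagonal_diag, ← hC.diagonal_diag, Matrix.mul_diagonal, Matrix.diagonal_mul] at h1
      rw [mul_comm] at h1
      exact mul_left_cancel₀ hne h1
    · rw [hA hij, hC hij]
  have : b * a * b⁻¹ = a := by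
    have := congrArg (fun z => P * z * P⁻¹) hca
    simp only [ha', hc'] at this
    group at this
    simpa [mul_assoc] using this
  rw [mul_inv_eq_iff_eq_mul] at this
  exact this.symm

theorem near_commute {m : ℕ} (Γ : Subgroup (unitaryGroup (Fin m) ℂ)) (hΓ : (Γ : Set (unitaryGroup (Fin m) ℂ)).Finite)
    (a : unitaryGroup (Fin m) ℂ) (ha : a ∈ Γ) (ha1 : ‖(a : Matrix (Fin m) (Fin m) ℂ) - 1‖ < 1/2)
    (b : unitaryGroup (Fin m) ℂ) (hb : b ∈ Γ) (hb1 : ‖(b : Matrix (Fin m) (Fin m) ℂ) - 1‖ < 1/2) :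
    a * b = b * a := by
  by_contra hne
  let S : Set (unitaryGroup (Fin m) ℂ) := {c | c ∈ Γ ∧ ‖(c : Matrix (Fin m) (Fin m) ℂ) - 1‖ < 1/2 ∧ a * c ≠ c * a}
  have hSf : S.Finite := hΓ.subset (fun c hc => hc.1)
  obtain ⟨c, ⟨hcΓ, hc1, hc2⟩, hmin⟩ := Set.exists_min_image S (fun c => ‖(c : Matrix (Fin m) (Fin m) ℂ) - 1‖) hSf ⟨b, hb, hb1, hne⟩
  have hcpos : 0 < ‖(c : Matrix (Fin m) (Fin m) ℂ) - 1‖ := by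
    rw [norm_pos_iff, sub_ne_zero]
    intro h
    have : c = 1 := Subtype.ext h
    exact hc2 (by simp [this])
  have hlt : ‖((a * c * a⁻¹ * c⁻¹ : unitaryGroup (Fin m) ℂ) : Matrix (Fin m) (Fin m) ℂ) - 1‖ <
      ‖(c : Matrix (Fin m) (Fin m) ℂ) - 1‖ := by
    refine (norm_comm_unitary a c).trans_lt ?_
    nlinarith
  have hd : a * (a * c * a⁻¹ * c⁻¹) = (a * c * a⁻¹ * c⁻¹) * a := by
    by_contra hd
    have := hmin _ ⟨Γ.mul_mem (Γ.mul_mem (Γ.mul_mem ha hcΓ) (Γ.inv_mem ha)) (Γ.inv_mem hcΓ),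
      hlt.trans hc1, hd⟩
    exact absurd this (not_le.2 hlt)
  apply hc2
  apply commute_of_commute_conj a c (by linarith)
  have h1 : Commute a (a * c * a⁻¹ * c⁻¹) := hd
  have h2 : Commute a (a⁻¹ * (a * c * a⁻¹ * c⁻¹)) := (Commute.refl a).inv_right.mul_right h1
  have h3 := h2.inv_right
  have h4 : (a⁻¹ * (a * c * a⁻¹ * c⁻¹))⁻¹ = c * a * c⁻¹ := by group
  rw [h4] at h3
  exact h3

theorem unitary_packing (m : ℕ) (r : ℝ) (hr : 0 < r) : ∃ N : ℕ, ∀ (ι : Type*) [Fintype ι]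
    (f : ι → unitaryGroup (Fin m) ℂ),
    (∀ i j, i ≠ j → r ≤ uDist m (f i) (f j)) → Fintype.card ι ≤ N := by
  have : FiniteDimensional ℂ (Matrix (Fin m) (Fin m) ℂ) := inferInstance
  have : ProperSpace (Matrix (Fin m) (Fin m) ℂ) := FiniteDimensional.proper ℂ _
  have hc : IsCompact (Metric.closedBall (0 : Matrix (Fin m) (Fin m) ℂ) ‖(1 : Matrix (Fin m) (Fin m) ℂ)‖) := isCompact_closedBall _ _
  obtain ⟨t, ht, hcov⟩ := Metric.totallyBounded_iff.1 hc.totallyBounded (r/2) (by positivity)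
  refine ⟨ht.toFinset.card, fun ι _ f hf => ?_⟩
  have hex : ∀ i, ∃ y ∈ t, dist (f i : Matrix (Fin m) (Fin m) ℂ) y < r/2 := by
    intro i
    have : (f i : Matrix (Fin m) (Fin m) ℂ) ∈ Metric.closedBall (0 : Matrix (Fin m) (Fin m) ℂ)
        ‖(1 : Matrix (Fin m) (Fin m) ℂ)‖ := by
      simp only [mem_closedBall_zero_iff]
      have := CStarRing.norm_coe_unitary_mul (f i) (1 : Matrix (Fin m) (Fin m) ℂ)
      rw [mul_one] at this
      exact this.le
    have := hcov this
    simpa using this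
  choose g hg hg2 using hex
  have hinj : Function.Injective g := by
    intro i j hij
    by_contra hne
    have h1 := hf i j hne
    have h2 : uDist m (f i) (f j) = dist (f i : Matrix (Fin m) (Fin m) ℂ) (f j) := by
      rw [dist_eq_norm]; rfl
    have h3 := dist_triangle_right (f i : Matrix (Fin m) (Fin m) ℂ) (f j) (g i)
    have h4 := hg2 i
    have h5 := hg2 j
    rw [← hij] at h5
    linarith
  rw [← Fintype.card_coe]
  exact Fintype.card_le_of_injective (fun i => (⟨g i, by simpa using hg i⟩ : ht.toFinset))
    (fun i j h => hinj (by simpa using h))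

end Jordan

section Bohr
open Matrix
open scoped Matrix.Norms.L2Operator InnerProductSpace

theorem uDist_eq {m : ℕ} (u v : unitaryGroup (Fin m) ℂ) :
    uDist m u v = ‖(u : Matrix (Fin m) (Fin m) ℂ) - v‖ := rfl

theorem uDist_inv_mul {m : ℕ} (u v : unitaryGroup (Fin m) ℂ) :
    uDist m (u⁻¹ * v) 1 = uDist m u v := by
  rw [uDist_eq, uDist_eq, norm_sub_rev (u : Matrix (Fin m) (Fin m) ℂ)]
  rw [← CStarRing.norm_coe_unitary_mul u⁻¹ ((v : Matrix (Fin m) (Fin m) ℂ) - u)]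
  have h1 : ((u⁻¹ * u : unitaryGroup (Fin m) ℂ) : Matrix (Fin m) (Fin m) ℂ) = 1 := by simp
  rw [mul_sub]
  congr 2
  exact h1.symm

theorem uDist_symm {m : ℕ} (u v : unitaryGroup (Fin m) ℂ) :
    uDist m u v = uDist m v u := by
  rw [uDist_eq, uDist_eq, norm_sub_rev]

theorem uDist_inv {m : ℕ} (u : unitaryGroup (Fin m) ℂ) :
    uDist m u⁻¹ 1 = uDist m u 1 := by
  have := uDist_inv_mul u 1
  rwa [mul_one] at this

theorem uDist_conj {m : ℕ} (P u : unitaryGroup (Fin m) ℂ) :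
    uDist m (P * u * P⁻¹) 1 = uDist m u 1 := norm_conj_unitary P u

theorem isDiag_mul' {m : ℕ} {A B : Matrix (Fin m) (Fin m) ℂ} (hA : A.IsDiag) (hB : B.IsDiag) :
    (A * B).IsDiag := by
  rw [← hA.diagonal_diag, ← hB.diagonal_diag, Matrix.diagonal_mul_diagonal]
  exact isDiag_diagonal _

theorem bohr_exists (m : ℕ) (r : ℝ) (hr : 0 < r) (hr2 : r ≤ 1/2) : ∃ N : ℕ, ∀ (G : Type*) [Group G]
    [Fintype G] (τ₀ : G →* unitaryGroup (Fin m) ℂ), ∃ n : ℕ, 1 ≤ n ∧ n ≤ N ∧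
      IsBohrNbhd r m n {g : G | uDist m (τ₀ g) 1 < r} ∧
      Nat.card G ≤ N * {g : G | uDist m (τ₀ g) 1 < r}.ncard := by
  classical
  obtain ⟨N₁, hN₁⟩ := unitary_packing m (1/2) (by norm_num)
  obtain ⟨N₂, hN₂⟩ := unitary_packing m r hr
  refine ⟨max N₁ N₂, fun G _ _ τ₀ => ?_⟩
  have hfin₀ : (τ₀.range : Set (unitaryGroup (Fin m) ℂ)).Finite := by
    rw [MonoidHom.coe_range]; exact Set.finite_range _
  obtain ⟨P, hP⟩ := simul_diag {u | u ∈ τ₀.range ∧ uDist m u 1 < 1/2} (by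
    rintro u ⟨hu, hu1⟩ v ⟨hv, hv1⟩
    exact near_commute τ₀.range hfin₀ u hu hu1 v hv hv1)
  let τ : G →* unitaryGroup (Fin m) ℂ := (MulAut.conj P⁻¹).toMonoidHom.comp τ₀
  have hτ : ∀ g, τ g = P⁻¹ * τ₀ g * P := by intro g; simp [τ]
  have hτd : ∀ g, uDist m (τ g) 1 = uDist m (τ₀ g) 1 := by
    intro g
    have := uDist_conj P⁻¹ (τ₀ g)
    rwa [inv_inv, ← hτ] at this
  have hfin : (τ.range : Set (unitaryGroup (Fin m) ℂ)).Finite := by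
    rw [MonoidHom.coe_range]; exact Set.finite_range _
  let S : Set (unitaryGroup (Fin m) ℂ) := {u | u ∈ τ.range ∧ uDist m u 1 < 1/2}
  let K := Subgroup.closure S
  have hSK : S ⊆ K := Subgroup.subset_closure
  have hKle : K ≤ τ.range := (Subgroup.closure_le _).2 (fun u hu => hu.1)
  have hKdiag : ∀ u ∈ K, Matrix.IsDiag (u : Matrix (Fin m) (Fin m) ℂ) := by
    intro u hu
    induction hu using Subgroup.closure_induction with
    | mem u hu =>
      obtain ⟨⟨g, rfl⟩, hu1⟩ := hu
      rw [hτ]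
      rw [hτd] at hu1
      exact hP _ ⟨⟨g, rfl⟩, hu1⟩
    | one => exact Matrix.isDiag_one
    | mul x y _ _ hx hy => exact isDiag_mul' hx hy
    | inv x _ hx => exact hx.conjTranspose
  have hKconj : ∀ g ∈ τ.range, ∀ u ∈ K, g * u * g⁻¹ ∈ K := by
    intro g hg u hu
    induction hu using Subgroup.closure_induction with
    | mem u hu =>
      exact hSK ⟨τ.range.mul_mem (τ.range.mul_mem hg hu.1) (τ.range.inv_mem hg), by
        rw [uDist_conj]; exact hu.2⟩
    | one => simp
    | mul x y _ _ hx hy =>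
      have := K.mul_mem hx hy
      convert this using 1
      group
    | inv x _ hx =>
      have := K.inv_mem hx
      convert this using 1
      group
  have hfi : Finite τ.range := hfin
  have hfq : Finite (τ.range ⧸ K.subgroupOf τ.range) := inferInstance
  have : Fintype (τ.range ⧸ K.subgroupOf τ.range) := Fintype.ofFinite _
  refine ⟨(K.subgroupOf τ.range).index, ?_, ?_, ?_, ?_⟩
  · exact Nat.one_le_iff_ne_zero.2 Subgroup.index_ne_zero_of_finite
  · refine le_trans ?_ (le_max_left _ _)
    rw [Subgroup.index, Nat.card_eq_fintype_card]
    apply hN₁ _ (fun q => (q.out : unitaryGroup (Fin m) ℂ))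
    intro i j hij
    by_contra hlt
    rw [not_le, ← uDist_inv_mul] at hlt
    apply hij
    rw [← QuotientGroup.out_eq' i, ← QuotientGroup.out_eq' j, QuotientGroup.eq,
      Subgroup.mem_subgroupOf]
    exact hSK ⟨(i.out⁻¹ * j.out).2, hlt⟩
  · refine ⟨τ, K, hKle, ?_, rfl, hKdiag, ?_⟩
    · constructor
      rintro ⟨u, hu⟩ huK ⟨g, hg⟩
      exact hKconj g hg u huK
    · ext g
      simp only [Set.mem_ofPred_eq]
      rw [hτd]
      constructor
      · intro h
        refine ⟨hSK ⟨⟨g, rfl⟩, ?_⟩, h⟩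
        rw [hτd]; linarith
      · exact fun h => h.2
  · set B := {g : G | uDist m (τ₀ g) 1 < r} with hB
    -- maximal separated set
    let sep : Finset G → Prop := fun Y => ∀ x ∈ Y, ∀ y ∈ Y, x ≠ y → r ≤ uDist m (τ₀ x) (τ₀ y)
    obtain ⟨Y, -, hY⟩ := (Set.toFinite {Y : Finset G | sep Y}).exists_le_maximal
      (show ∅ ∈ {Y : Finset G | sep Y} by simp [sep])
    have hYs : sep Y := hY.prop
    have hcard : Y.card ≤ N₂ := by
      rw [← Fintype.card_coe]
      exact hN₂ _ (fun y : Y => τ₀ y) (fun i j hij => hYs _ i.2 _ j.2 (fun h => hij (Subtype.ext h)))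
    have hcov : (Set.univ : Set G) ⊆ ⋃ y ∈ Y, y • B := by
      intro x _
      simp only [Set.mem_iUnion]
      by_contra hx
      push Not at hx
      have hx' : ∀ y ∈ Y, r ≤ uDist m (τ₀ y) (τ₀ x) := by
        intro y hy
        by_contra hlt
        apply hx y hy
        rw [Set.mem_smul_set_iff_inv_smul_mem, smul_eq_mul, hB, Set.mem_ofPred_eq, map_mul, map_inv,
          uDist_inv_mul]
        linarith
      have hins : sep (insert x Y) := by
        intro a ha b hb hab
        rw [Finset.mem_insert] at ha hb
        rcases ha with rfl | ha <;> rcases hb with rfl | hb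
        · exact absurd rfl hab
        · rw [uDist_symm]; exact hx' b hb
        · exact hx' a ha
        · exact hYs a ha b hb hab
      have hxY : x ∈ Y := hY.le_of_ge hins (Finset.subset_insert x Y) (Finset.mem_insert_self x Y)
      have := hx' x hxY
      rw [uDist_eq, sub_self, norm_zero] at this
      linarith
    have h1 : Nat.card G ≤ (⋃ y ∈ Y, y • B).ncard := by
      rw [← Set.ncard_univ]
      exact Set.ncard_le_ncard hcov (Set.toFinite _)
    have h2 : (⋃ y ∈ Y, y • B).ncard ≤ ∑ y ∈ Y, (y • B).ncard := Finset.set_ncard_biUnion_le _ _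
    have h3 : ∑ y ∈ Y, (y • B).ncard = Y.card * B.ncard := by
      simp [Set.ncard_smul_set]
    calc Nat.card G ≤ Y.card * B.ncard := by omega
      _ ≤ _ := Nat.mul_le_mul_right _ (hcard.trans (le_max_right _ _))

end Bohr

section Packing

theorem card_le_of_vcDim {G : Type*} {F : Set (Set G)} {d : ℕ} (h : vcDim F ≤ (d : ℕ∞))
    (S : Finset G) (hS : Shatters F ↑S) : S.card ≤ d := by
  have : (S.card : ℕ∞) ≤ vcDim F := le_iSup₂_of_le S hS le_rfl
  exact_mod_cast this.trans h

theorem vc_packing (d : ℕ) (η : ℝ) (hη : 0 < η) (hη1 : η < 1) : ∃ N : ℕ, ∀ (G : Type*) [Fintype G]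
    [Nonempty G] (F : Set (Set G)), vcDim F ≤ (d : ℕ∞) → ∀ (ι : Type*) [Fintype ι] (X : ι → Set G),
    (∀ i, X i ∈ F) → (∀ i j, i ≠ j → η * Nat.card G < (X i ∆ X j).ncard) → Fintype.card ι ≤ N := by
  classical
  have hlim : ∀ᶠ k : ℕ in Filter.atTop, ((d + 2 : ℝ)^2 * ((k : ℝ)^(2*d) * (1-η)^k)) < 1 := by
    have h := (tendsto_pow_const_mul_const_pow_of_abs_lt_one (2*d) (r := 1 - η)
      (by rw [abs_lt]; constructor <;> linarith)).const_mul ((d + 2 : ℝ)^2)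
    rw [mul_zero] at h
    exact h.eventually_lt_const one_pos
  obtain ⟨k, hk, hk1⟩ := (hlim.and (Filter.eventually_ge_atTop 1)).exists
  refine ⟨(d+1) * k^d, fun G _ _ F hF ι _ X hXF hX => ?_⟩
  by_contra hcard
  rw [not_le] at hcard
  set M := (d+1) * k^d + 1 with hM
  obtain ⟨s, -, hs⟩ := Finset.exists_subset_card_eq (s := (Finset.univ : Finset ι)) (n := M)
    (by rw [Finset.card_univ]; omega)
  have hGpos : (0 : ℝ) < Nat.card G := by exact_mod_cast Nat.card_pos
  let D : ι × ι → Finset G := fun p => Finset.univ.filter (fun g => g ∉ X p.1 ∆ X p.2)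
  let bad : ι × ι → Finset (Fin k → G) := fun p => Fintype.piFinset (fun _ => D p)
  have hD : ∀ p ∈ s.offDiag, ((D p).card : ℝ) ≤ (1-η) * Nat.card G := by
    rintro ⟨i, j⟩ hp
    have h1 := hX i j (Finset.mem_offDiag.1 hp).2.2
    have h2 : (D (i,j)).card + (X i ∆ X j).ncard = Nat.card G := by
      rw [Set.ncard_eq_toFinset_card', Nat.card_eq_fintype_card, ← Finset.card_univ,
        ← Finset.card_filter_add_card_filter_not (s := Finset.univ) (fun g => g ∉ X i ∆ X j)]
      congr 2
      ext g; simp [Finset.mem_symmDiff, Set.mem_symmDiff]; tauto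
    have h3 : ((D (i,j)).card : ℝ) + (X i ∆ X j).ncard = Nat.card G := by exact_mod_cast h2
    linarith
  have hbad : ∀ p ∈ s.offDiag, ((bad p).card : ℝ) ≤ ((1-η) * Nat.card G)^k := by
    intro p hp
    simp only [bad, Fintype.card_piFinset, Finset.prod_const, Finset.card_univ, Fintype.card_fin]
    push_cast
    exact pow_le_pow_left₀ (by positivity) (hD p hp) k
  have hlt : (((s.offDiag).biUnion bad).card : ℝ) < (Fintype.card (Fin k → G) : ℝ) := by
    have h1 : (((s.offDiag).biUnion bad).card : ℝ) ≤ ∑ p ∈ s.offDiag, ((bad p).card : ℝ) := by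
      exact_mod_cast Finset.card_biUnion_le
    have h2 : ∑ p ∈ s.offDiag, ((bad p).card : ℝ) ≤ s.offDiag.card * ((1-η) * Nat.card G)^k := by
      rw [← nsmul_eq_mul]
      exact Finset.sum_le_card_nsmul _ _ _ hbad
    have h3 : (s.offDiag.card : ℝ) ≤ (M : ℝ)^2 := by
      rw [Finset.offDiag_card, hs]
      have : M * M - M ≤ M^2 := by rw [sq]; omega
      exact_mod_cast this
    have hkd : (1 : ℝ) ≤ (k : ℝ)^d := one_le_pow₀ (by exact_mod_cast hk1)
    have h4 : (M : ℝ) ≤ (d+2) * (k : ℝ)^d := by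
      rw [hM]; push_cast; nlinarith
    have h5 : (M : ℝ)^2 * (1-η)^k < 1 := by
      refine lt_of_le_of_lt ?_ hk
      have : (M : ℝ)^2 ≤ ((d+2) * (k : ℝ)^d)^2 := pow_le_pow_left₀ (by positivity) h4 2
      calc (M : ℝ)^2 * (1-η)^k ≤ ((d+2) * (k : ℝ)^d)^2 * (1-η)^k :=
            mul_le_mul_of_nonneg_right this (pow_nonneg (by linarith) k)
        _ = _ := by ring
    have h6 : (Fintype.card (Fin k → G) : ℝ) = (Nat.card G : ℝ)^k := by
      simp
    rw [h6]
    calc _ ≤ s.offDiag.card * ((1-η) * Nat.card G)^k := h1.trans h2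
      _ ≤ (M : ℝ)^2 * ((1-η) * Nat.card G)^k := by
          apply mul_le_mul_of_nonneg_right h3
          exact pow_nonneg (mul_nonneg (by linarith) hGpos.le) k
      _ = ((M : ℝ)^2 * (1-η)^k) * (Nat.card G : ℝ)^k := by rw [mul_pow]; ring
      _ < 1 * (Nat.card G : ℝ)^k := mul_lt_mul_of_pos_right h5 (by positivity)
      _ = _ := one_mul _
  obtain ⟨x, hx⟩ : ∃ x, x ∉ (s.offDiag).biUnion bad := by
    by_contra hall
    push Not at hall
    have : (s.offDiag).biUnion bad = Finset.univ := Finset.eq_univ_iff_forall.2 hall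
    rw [this, Finset.card_univ] at hlt
    exact lt_irrefl _ hlt
  let tr : ι → Finset (Fin k) := fun i => Finset.univ.filter (fun t => x t ∈ X i)
  have hinj : Set.InjOn tr s := by
    intro i hi j hj hij
    by_contra hne
    apply hx
    rw [Finset.mem_biUnion]
    refine ⟨(i,j), Finset.mem_offDiag.2 ⟨hi, hj, hne⟩, ?_⟩
    simp only [bad, Fintype.mem_piFinset, D, Finset.mem_filter, Finset.mem_univ, true_and]
    intro t
    have := Finset.ext_iff.1 hij t
    simp only [tr, Finset.mem_filter, Finset.mem_univ, true_and] at this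
    rw [Set.mem_symmDiff]
    tauto
  let 𝒜 := s.image tr
  have hA : 𝒜.card = M := by rw [Finset.card_image_of_injOn hinj, hs]
  have hsh : ∀ T, 𝒜.Shatters T → T.card ≤ d := by
    intro T hT
    have hxinj : Set.InjOn x T := by
      intro a ha b hb hab
      by_contra hne
      obtain ⟨u, hu, hTu⟩ := hT (Finset.singleton_subset_iff.2 ha)
      obtain ⟨i, _, rfl⟩ := Finset.mem_image.1 hu
      have h1 : a ∈ T ∩ tr i := by rw [hTu]; simp
      have h2 : b ∉ T ∩ tr i := by rw [hTu]; simpa using fun h => hne h.symm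
      simp only [tr, Finset.mem_inter, Finset.mem_filter, Finset.mem_univ, true_and] at h1 h2
      rw [hab] at h1
      exact h2 ⟨hb, h1.2⟩
    rw [← Finset.card_image_of_injOn hxinj]
    apply card_le_of_vcDim hF
    intro R hR
    obtain ⟨u, hu, hTu⟩ := hT (Finset.filter_subset (fun t => x t ∈ R) T)
    obtain ⟨i, _, rfl⟩ := Finset.mem_image.1 hu
    refine ⟨X i, hXF i, ?_⟩
    ext g
    constructor
    · rintro ⟨hg, hgX⟩
      obtain ⟨t, ht, rfl⟩ := Finset.mem_image.1 (Finset.mem_coe.1 hg)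
      have : t ∈ T ∩ tr i := by simp [tr, ht, hgX]
      rw [hTu] at this
      exact (Finset.mem_filter.1 this).2
    · intro hg
      refine ⟨hR hg, ?_⟩
      obtain ⟨t, ht, rfl⟩ := Finset.mem_image.1 (Finset.mem_coe.1 (hR hg))
      have : t ∈ T ∩ tr i := by rw [hTu]; exact Finset.mem_filter.2 ⟨ht, hg⟩
      simpa [tr, ht] using this
  have hvc : 𝒜.vcDim ≤ d := by
    rw [Finset.vcDim, Finset.sup_le_iff]
    intro T hT
    exact hsh T (Finset.mem_shatterer.1 hT)
  have h1 : M ≤ ∑ j ∈ Finset.Iic 𝒜.vcDim, (Fintype.card (Fin k)).choose j := by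
    rw [← hA]; exact 𝒜.card_le_card_shatterer.trans Finset.card_shatterer_le_sum_vcDim
  have h2 : ∑ j ∈ Finset.Iic 𝒜.vcDim, (Fintype.card (Fin k)).choose j ≤ ∑ j ∈ Finset.Iic d, k^d := by
    refine (Finset.sum_le_sum_of_subset (Finset.Iic_subset_Iic.2 hvc)).trans ?_
    apply Finset.sum_le_sum
    intro j hj
    rw [Fintype.card_fin]
    exact (Nat.choose_le_pow k j).trans (Nat.pow_le_pow_right hk1 (Finset.mem_Iic.1 hj))
  rw [Finset.sum_const, smul_eq_mul, Nat.card_Iic] at h2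
  omega

theorem mul_singleton_ncard {G : Type*} [Group G] [Finite G] (A : Set G) (x : G) :
    (A * {x}).ncard = A.ncard := by
  rw [Set.mul_singleton]
  exact Set.ncard_image_of_injective _ (mul_left_injective x)

theorem symmDiff_mul_singleton {G : Type*} [Group G] (A B : Set G) (x : G) :
    (A ∆ B) * {x} = (A * {x}) ∆ (B * {x}) := by
  simp only [Set.mul_singleton]
  exact Set.image_symmDiff (mul_left_injective x) A B

/-- The stabilizer is large. -/
theorem stab_large (d : ℕ) (α η : ℝ) (hα0 : 0 < α) (hα1 : α < 1) (hη : 0 < η) (hη1 : η < 1) :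
    ∃ N : ℕ, 1 ≤ N ∧ ∀ (G : Type*) [Group G] [Fintype G] (A : Set G), A.Nonempty →
      vcDim (rightFam A A) ≤ (d : ℕ∞) → α * Nat.card G ≤ A.ncard →
      α * Nat.card G ≤ N * (stR A η).ncard := by
  classical
  obtain ⟨N, hN⟩ := vc_packing d (η * α) (by positivity) (by nlinarith)
  refine ⟨N + 1, by omega, fun G _ _ A hA hvc hαA => ?_⟩
  let sep : Finset G → Prop := fun Y => (∀ x ∈ Y, x ∈ A) ∧
    ∀ x ∈ Y, ∀ y ∈ Y, x ≠ y → η * A.ncard < ((A * {x}) ∆ (A * {y})).ncard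
  obtain ⟨Y, -, hY⟩ := (Set.toFinite {Y : Finset G | sep Y}).exists_le_maximal
      (show ∅ ∈ {Y : Finset G | sep Y} by simp [sep])
  have hYs : sep Y := hY.prop
  have hcard : Y.card ≤ N := by
    rw [← Fintype.card_coe]
    refine hN G (rightFam A A) hvc Y (fun y => A * {y.1}) (fun y => ⟨y, hYs.1 _ y.2, rfl⟩)
      (fun i j hij => ?_)
    refine lt_of_le_of_lt ?_ (hYs.2 _ i.2 _ j.2 (fun h => hij (Subtype.ext h)))
    rw [mul_assoc]
    exact mul_le_mul_of_nonneg_left hαA hη.le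
  have hcov : A ⊆ ⋃ y ∈ Y, stR A η * {y} := by
    intro x hxA
    simp only [Set.mem_iUnion]
    by_contra hx
    push Not at hx
    have hx' : ∀ y ∈ Y, η * A.ncard < ((A * {x}) ∆ (A * {y})).ncard := by
      intro y hy
      by_contra hlt
      apply hx y hy
      rw [Set.mem_mul]
      refine ⟨x * y⁻¹, ?_, y, rfl, by group⟩
      change (((A * {x * y⁻¹}) ∆ A).ncard : ℝ) ≤ η * A.ncard
      have h1 : (A * {x * y⁻¹}) ∆ A = ((A * {x}) ∆ (A * {y})) * {y⁻¹} := by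
        rw [symmDiff_mul_singleton, mul_assoc, mul_assoc, Set.singleton_mul_singleton,
          Set.singleton_mul_singleton]
        simp
      rw [h1, mul_singleton_ncard]
      exact not_lt.1 hlt
    have hins : sep (insert x Y) := by
      refine ⟨?_, ?_⟩
      · intro a ha
        rcases Finset.mem_insert.1 ha with rfl | ha
        · exact hxA
        · exact hYs.1 a ha
      intro a ha b hb hab
      rw [Finset.mem_insert] at ha hb
      rcases ha with rfl | ha <;> rcases hb with rfl | hb
      · exact absurd rfl hab
      · exact hx' b hb
      · rw [symmDiff_comm]; exact hx' a ha
      · exact hYs.2 a ha b hb hab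
    have hxY : x ∈ Y := hY.le_of_ge hins (Finset.subset_insert x Y) (Finset.mem_insert_self x Y)
    have := hx' x hxY
    simp only [symmDiff_self, Set.bot_eq_empty, Set.ncard_empty] at this
    have h0 : (0 : ℝ) ≤ A.ncard := by positivity
    push_cast at this
    nlinarith
  have h1 : A.ncard ≤ (⋃ y ∈ Y, stR A η * {y}).ncard := Set.ncard_le_ncard hcov (Set.toFinite _)
  have h2 : (⋃ y ∈ Y, stR A η * {y}).ncard ≤ ∑ y ∈ Y, (stR A η * {y}).ncard :=
    Finset.set_ncard_biUnion_le _ _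
  have h3 : ∑ y ∈ Y, (stR A η * {y}).ncard = Y.card * (stR A η).ncard := by
    simp only [mul_singleton_ncard, Finset.sum_const, smul_eq_mul]
  have h4 : A.ncard ≤ (N+1) * (stR A η).ncard := by
    calc A.ncard ≤ Y.card * (stR A η).ncard := by omega
      _ ≤ _ := Nat.mul_le_mul_right _ (by omega)
  refine hαA.trans ?_
  exact_mod_cast h4

end Packing

section Rep
open Matrix
open scoped Matrix.Norms.L2Operator InnerProductSpace

theorem rep_approx {G E : Type*} [Group G] [Fintype G] [NormedAddCommGroup E]
    [InnerProductSpace ℂ E] [FiniteDimensional ℂ E] (ρ : G →* (E ≃ₗᵢ[ℂ] E)) (f : E) (hf : f ≠ 0)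
    (c η : ℝ) (hc : 0 < c) (hη : 0 < η) (hη2 : η < 1/2)
    (hS : c * Nat.card G ≤ {x : G | ‖ρ x f - f‖ ≤ η * ‖f‖}.ncard) :
    ∃ m : ℕ, 1 ≤ m ∧ (m : ℝ) ≤ 1 / (c * η^2) ∧ ∃ τ : G →* unitaryGroup (Fin m) ℂ,
      ∀ x, ‖ρ x f - f‖ ≤ (4 * η + uDist m (τ x) 1) * ‖f‖ := by
  classical
  have hfpos : 0 < ‖f‖ := norm_pos_iff.2 hf
  have hGpos : (0 : ℝ) < Nat.card G := by exact_mod_cast Nat.card_pos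
  have hmul : ∀ x y v, ρ (x * y) v = ρ x (ρ y v) := by
    intro x y v; rw [map_mul]; rfl
  let T : E →ₗ[ℂ] E := ∑ x : G, (innerₛₗ ℂ (ρ x f)).smulRight (ρ x f)
  have hTapp : ∀ v, T v = ∑ x : G, ⟪ρ x f, v⟫_ℂ • ρ x f := by
    intro v; simp [T, LinearMap.sum_apply]
  have hTsymm : T.IsSymmetric := by
    intro v w
    rw [hTapp, hTapp, sum_inner, inner_sum]
    refine Finset.sum_congr rfl fun x _ => ?_
    rw [inner_smul_left, inner_smul_right, inner_conj_symm, mul_comm]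
  have hTρ : ∀ y v, T (ρ y v) = ρ y (T v) := by
    intro y v
    rw [hTapp, hTapp, map_sum, ← Equiv.sum_comp (Equiv.mulLeft y)]
    refine Finset.sum_congr rfl fun x _ => ?_
    rw [Equiv.coe_mulLeft, hmul,
      LinearIsometryEquiv.inner_map_map, map_smul]
  have hq : ∀ v, (⟪v, T v⟫_ℂ) = ((∑ x : G, ‖⟪ρ x f, v⟫_ℂ‖^2 : ℝ) : ℂ) := by
    intro v
    rw [hTapp, inner_sum]
    push_cast
    refine Finset.sum_congr rfl fun x _ => ?_
    rw [inner_smul_right, ← inner_conj_symm v (ρ x f), Complex.mul_conj']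
  set n := Module.finrank ℂ E with hn
  let e := hTsymm.eigenvectorBasis hn.symm
  let μ := hTsymm.eigenvalues hn.symm
  have hTe : ∀ i, T (e i) = (μ i : ℂ) • e i := fun i => hTsymm.apply_eigenvectorBasis hn.symm i
  have hq2 : ∀ v, ∑ x : G, ‖⟪ρ x f, v⟫_ℂ‖^2 = ∑ i, μ i * ‖⟪e i, v⟫_ℂ‖^2 := by
    intro v
    have h := hq v
    rw [← e.sum_inner_mul_inner] at h
    have h2 : ∀ i, ⟪v, e i⟫_ℂ * ⟪e i, T v⟫_ℂ = ((μ i * ‖⟪e i, v⟫_ℂ‖^2 : ℝ) : ℂ) := by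
      intro i
      rw [← hTsymm, hTe, inner_smul_left, ← inner_conj_symm v (e i)]
      push_cast
      rw [← Complex.conj_mul']
      simp
      ring
    rw [Finset.sum_congr rfl fun i _ => h2 i, ← Complex.ofReal_sum] at h
    exact_mod_cast h.symm
  have hμ0 : ∀ i, 0 ≤ μ i := by
    intro i
    have h := hq2 (e i)
    rw [Finset.sum_eq_single i (fun j _ hj => by simp [e.inner_eq_zero hj]) (by simp)] at h
    simp at h
    rw [← h]; positivity
  have htr : ∑ i, μ i = Nat.card G * ‖f‖^2 := by
    have h1 : ∀ i, μ i = ∑ x : G, ‖⟪ρ x f, e i⟫_ℂ‖^2 := by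
      intro i
      rw [hq2 (e i), Finset.sum_eq_single i (fun j _ hj => by simp [e.inner_eq_zero hj]) (by simp)]
      simp
    rw [Finset.sum_congr rfl fun i _ => h1 i, Finset.sum_comm]
    have h2 : ∀ x : G, ∑ i, ‖⟪ρ x f, e i⟫_ℂ‖^2 = ‖f‖^2 := by
      intro x
      rw [e.sum_sq_norm_inner_left, LinearIsometryEquiv.norm_map]
    simp [h2]
  set lam : ℝ := c * η^2 * Nat.card G * ‖f‖^2 with hlam
  have hlampos : 0 < lam := by positivity
  let I : Finset (Fin n) := Finset.univ.filter (fun i => lam ≤ μ i)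
  have hI : ∀ i, i ∈ I ↔ lam ≤ μ i := by intro i; simp [I]
  have hmle : (I.card : ℝ) ≤ 1 / (c * η^2) := by
    have h1 : I.card * lam ≤ Nat.card G * ‖f‖^2 := by
      rw [← htr, ← nsmul_eq_mul]
      refine (Finset.card_nsmul_le_sum I μ lam (fun i hi => (hI i).1 hi)).trans ?_
      exact Finset.sum_le_sum_of_subset_of_nonneg (Finset.subset_univ _) (fun i _ _ => hμ0 i)
    rw [le_div_iff₀ (by positivity)]
    have h2 : (0 : ℝ) < Nat.card G * ‖f‖^2 := by positivity
    rw [hlam] at h1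
    by_contra hcon
    rw [not_le] at hcon
    nlinarith
  -- off-diagonal vanishing
  have hoff : ∀ x i j, i ∈ I → j ∉ I → ⟪e i, ρ x (e j)⟫_ℂ = 0 := by
    intro x i j hi hj
    have h1 : ⟪T (e i), ρ x (e j)⟫_ℂ = ⟪e i, T (ρ x (e j))⟫_ℂ := hTsymm _ _
    rw [hTρ, hTe, hTe, map_smul, inner_smul_left, inner_smul_right, Complex.conj_ofReal] at h1
    have h2 : (μ i : ℂ) ≠ μ j := by
      intro h
      have : μ i = μ j := by exact_mod_cast h
      rw [hI] at hi hj
      rw [this] at hi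
      exact hj hi
    have h3 : ((μ i : ℂ) - μ j) * ⟪e i, ρ x (e j)⟫_ℂ = 0 := by rw [sub_mul, h1, sub_self]
    exact (mul_eq_zero.1 h3).resolve_left (sub_ne_zero.2 h2)
  have hadj : ∀ x v w, ⟪v, ρ x w⟫_ℂ = ⟪ρ x⁻¹ v, w⟫_ℂ := by
    intro x v w
    rw [← LinearIsometryEquiv.inner_map_map (ρ x) (ρ x⁻¹ v) w, ← hmul]
    simp
  have hoff' : ∀ x i j, i ∉ I → j ∈ I → ⟪e i, ρ x (e j)⟫_ℂ = 0 := by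
    intro x i j hi hj
    rw [hadj, ← inner_conj_symm, hoff _ _ _ hj hi, map_zero]
  let σ : Fin I.card ≃ I := I.equivFin.symm
  have hsum : ∀ F : Fin n → ℂ, (∀ i, i ∉ I → F i = 0) → ∑ i, F i = ∑ a, F (σ a) := by
    intro F hF
    rw [σ.sum_comp (fun i : I => F i), Finset.sum_coe_sort I F]
    exact (Finset.sum_subset (Finset.subset_univ I) (fun i _ hi => hF i hi)).symm
  let t : G → Matrix (Fin I.card) (Fin I.card) ℂ := fun x => Matrix.of fun a b =>
    ⟪e (σ a), ρ x (e (σ b))⟫_ℂ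
  have ht1 : t 1 = 1 := by
    ext a b
    simp only [t, Matrix.of_apply, map_one, LinearIsometryEquiv.coe_one, id]
    rw [e.inner_eq_ite, Matrix.one_apply]
    simp [Subtype.ext_iff.symm]
  have htmul : ∀ x y, t (x * y) = t x * t y := by
    intro x y
    ext a b
    simp only [t, Matrix.of_apply, Matrix.mul_apply]
    rw [hmul, hadj, ← e.sum_inner_mul_inner]
    rw [hsum]
    · simp only [hadj x]
    · intro i hi
      rw [hoff' y i _ hi (σ b).2, mul_zero]
  have htstar : ∀ x, star (t x) = t x⁻¹ := by
    intro x
    ext a b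
    simp only [t, Matrix.star_apply, Matrix.of_apply]
    rw [hadj]
    exact inner_conj_symm _ _
  let τ : G →* unitaryGroup (Fin I.card) ℂ :=
    { toFun := fun x => ⟨t x, by
        rw [Matrix.mem_unitaryGroup_iff, htstar, ← htmul, mul_inv_cancel, ht1]⟩
      map_one' := Subtype.ext ht1
      map_mul' := fun x y => Subtype.ext (htmul x y) }
  -- decomposition
  let f2 : E := ∑ i, (if i ∈ I then 0 else ⟪e i, f⟫_ℂ) • e i
  have hf2 : ∀ i, ⟪e i, f2⟫_ℂ = if i ∈ I then 0 else ⟪e i, f⟫_ℂ := by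
    intro i
    exact e.orthonormal.inner_right_fintype _ i
  have hff2 : ⟪f, f2⟫_ℂ = ((‖f2‖^2 : ℝ) : ℂ) := by
    have h1 : ⟪f, f2⟫_ℂ = ⟪f2, f2⟫_ℂ := by
      rw [← e.sum_inner_mul_inner, ← e.sum_inner_mul_inner f2 f2]
      refine Finset.sum_congr rfl fun i _ => ?_
      by_cases hi : i ∈ I
      · simp [hf2, hi]
      · congr 1
        rw [← inner_conj_symm, ← inner_conj_symm f2, hf2, if_neg hi]
    rw [h1, inner_self_eq_norm_sq_to_K]
    simp
  have hf2small : ‖f2‖ ≤ 2 * η * ‖f‖ := by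
    by_contra hlt
    rw [not_le] at hlt
    have hf2pos : 0 < ‖f2‖ := lt_trans (by positivity) hlt
    set r := ‖f2‖ - η * ‖f‖ with hr
    have hrpos : 0 < η * ‖f‖ := by positivity
    have hrη : η * ‖f‖ < r := by rw [hr]; linarith
    have hup : ∑ x : G, ‖⟪ρ x f, f2⟫_ℂ‖^2 ≤ lam * ‖f2‖^2 := by
      rw [hq2, ← e.sum_sq_norm_inner_right f2, Finset.mul_sum]
      refine Finset.sum_le_sum fun i _ => ?_
      by_cases hi : i ∈ I
      · simp [hf2, hi]
      · refine mul_le_mul_of_nonneg_right ?_ (by positivity)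
        rw [hI] at hi
        exact (not_le.1 hi).le
    have hlow : ∀ x ∈ {x : G | ‖ρ x f - f‖ ≤ η * ‖f‖}, (r * ‖f2‖)^2 ≤ ‖⟪ρ x f, f2⟫_ℂ‖^2 := by
      intro x hx
      have hx' : ‖ρ x f - f‖ ≤ η * ‖f‖ := hx
      refine pow_le_pow_left₀ (by nlinarith) ?_ 2
      have h1 : ⟪ρ x f, f2⟫_ℂ = ⟪f, f2⟫_ℂ + ⟪ρ x f - f, f2⟫_ℂ := by
        rw [inner_sub_left]; ring
      have h2 : ‖⟪ρ x f - f, f2⟫_ℂ‖ ≤ η * ‖f‖ * ‖f2‖ :=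
        (norm_inner_le_norm _ _).trans (mul_le_mul_of_nonneg_right hx' (norm_nonneg _))
      have h3 : ‖⟪f, f2⟫_ℂ‖ = ‖f2‖^2 := by
        rw [hff2, Complex.norm_real, Real.norm_of_nonneg (by positivity)]
      have h4 := norm_sub_le (⟪f, f2⟫_ℂ + ⟪ρ x f - f, f2⟫_ℂ) (⟪ρ x f - f, f2⟫_ℂ)
      rw [add_sub_cancel_right, h3, ← h1] at h4
      rw [hr]
      nlinarith
    have hlow2 : c * Nat.card G * (r * ‖f2‖)^2 ≤ ∑ x : G, ‖⟪ρ x f, f2⟫_ℂ‖^2 := by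
      rw [Set.ncard_eq_toFinset_card'] at hS
      calc c * Nat.card G * (r * ‖f2‖)^2 ≤
          ({x : G | ‖ρ x f - f‖ ≤ η * ‖f‖}.toFinset.card : ℝ) * (r * ‖f2‖)^2 :=
            mul_le_mul_of_nonneg_right hS (by positivity)
        _ ≤ ∑ x ∈ {x : G | ‖ρ x f - f‖ ≤ η * ‖f‖}.toFinset, ‖⟪ρ x f, f2⟫_ℂ‖^2 := by
            rw [← nsmul_eq_mul]
            exact Finset.card_nsmul_le_sum _ _ _ (fun x hx => hlow x (Set.mem_toFinset.1 hx))
        _ ≤ _ := Finset.sum_le_sum_of_subset_of_nonneg (Finset.subset_univ _)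
            (fun _ _ _ => by positivity)
    have h5 : c * Nat.card G * (r * ‖f2‖)^2 ≤ lam * ‖f2‖^2 := hlow2.trans hup
    have h6 : (η * ‖f‖)^2 < r^2 := pow_lt_pow_left₀ hrη hrpos.le (by norm_num)
    have h7 : 0 < c * Nat.card G * ‖f2‖^2 := by positivity
    have h8 : lam * ‖f2‖^2 = (c * Nat.card G * ‖f2‖^2) * (η * ‖f‖)^2 := by rw [hlam]; ring
    have h9 : c * Nat.card G * (r * ‖f2‖)^2 = (c * Nat.card G * ‖f2‖^2) * r^2 := by ring
    rw [h8, h9] at h5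
    exact absurd (le_of_mul_le_mul_left h5 h7) (not_le.2 h6)
  refine ⟨I.card, ?_, hmle, τ, ?_⟩
  · rw [Nat.one_le_iff_ne_zero, Finset.card_ne_zero]
    by_contra hemp
    rw [Finset.not_nonempty_iff_eq_empty] at hemp
    have : f2 = f := by
      simp only [f2, hemp, Finset.notMem_empty, if_false]
      exact e.sum_repr' f
    rw [this] at hf2small
    nlinarith
  · intro x
    set f1 := f - f2 with hf1d
    have hf1 : ∀ i, ⟪e i, f1⟫_ℂ = if i ∈ I then ⟪e i, f⟫_ℂ else 0 := by
      intro i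
      rw [hf1d, inner_sub_right, hf2]
      split_ifs <;> simp
    let w : EuclideanSpace ℂ (Fin I.card) := WithLp.toLp 2 (fun a => ⟪e (σ a), f⟫_ℂ)
    have hsumR : ∀ F : Fin n → ℝ, (∀ i, i ∉ I → F i = 0) → ∑ i, F i = ∑ a, F (σ a) := by
      intro F hF
      rw [σ.sum_comp (fun i : I => F i), Finset.sum_coe_sort I F]
      exact (Finset.sum_subset (Finset.subset_univ I) (fun i _ hi => hF i hi)).symm
    have hw : ‖w‖ ≤ ‖f‖ := by
      refine le_of_sq_le_sq ?_ (norm_nonneg _)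
      rw [EuclideanSpace.norm_sq_eq, ← e.sum_sq_norm_inner_right f]
      simp only [w]
      rw [σ.sum_comp (fun i : I => ‖⟪e i, f⟫_ℂ‖^2),
        Finset.sum_coe_sort I (fun i => ‖⟪e i, f⟫_ℂ‖^2)]
      exact Finset.sum_le_sum_of_subset_of_nonneg (Finset.subset_univ _)
            (fun _ _ _ => by positivity)
    have hcomp : ∀ i, ⟪e i, ρ x f1⟫_ℂ = ∑ a, ⟪e i, ρ x (e (σ a))⟫_ℂ * ⟪e (σ a), f⟫_ℂ := by
      intro i
      rw [hadj, ← e.sum_inner_mul_inner, hsum]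
      · refine Finset.sum_congr rfl fun a _ => ?_
        rw [hf1, if_pos (σ a).2, hadj]
      · intro k hk
        rw [hf1, if_neg hk, mul_zero]
    have hz : ‖ρ x f1 - f1‖ = ‖(WithLp.toLp 2 (((t x - 1) *ᵥ w.ofLp)) : EuclideanSpace ℂ (Fin I.card))‖ := by
      refine (sq_eq_sq₀ (norm_nonneg _) (norm_nonneg _)).1 ?_
      rw [EuclideanSpace.norm_sq_eq, ← e.sum_sq_norm_inner_right, hsumR]
      · refine Finset.sum_congr rfl fun a _ => ?_
        congr 2
        rw [inner_sub_right, hcomp, hf1, if_pos (σ a).2, Matrix.sub_mulVec, Matrix.one_mulVec]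
        simp [w, t, Matrix.mulVec, dotProduct]
      · intro i hi
        rw [inner_sub_right, hcomp, hf1, if_neg hi, sub_zero]
        rw [Finset.sum_eq_zero (fun a _ => by rw [hoff' x i _ hi (σ a).2, zero_mul])]
        simp
    have hz2 : ‖ρ x f1 - f1‖ ≤ uDist I.card (τ x) 1 * ‖f‖ := by
      rw [hz]
      refine (Matrix.l2_opNorm_mulVec _ _).trans ?_
      exact mul_le_mul_of_nonneg_left hw (norm_nonneg _)
    have hdec : ρ x f - f = (ρ x f1 - f1) + (ρ x f2 - f2) := by
      rw [hf1d, map_sub]; abel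
    calc ‖ρ x f - f‖ ≤ ‖ρ x f1 - f1‖ + ‖ρ x f2 - f2‖ := by rw [hdec]; exact norm_add_le _ _
      _ ≤ ‖ρ x f1 - f1‖ + (‖ρ x f2‖ + ‖f2‖) := by gcongr; exact norm_sub_le _ _
      _ ≤ uDist I.card (τ x) 1 * ‖f‖ + (2 * η * ‖f‖ + 2 * η * ‖f‖) := by
          rw [LinearIsometryEquiv.norm_map]; gcongr
      _ = _ := by ring

end Rep

/-- The right regular representation on `ℓ²(G)`. -/
noncomputable def regRep (G : Type*) [Group G] [Fintype G] :
    G →* (EuclideanSpace ℂ G ≃ₗᵢ[ℂ] EuclideanSpace ℂ G) where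
  toFun x := LinearIsometryEquiv.piLpCongrLeft 2 ℂ ℂ (Equiv.mulRight x⁻¹)
  map_one' := by
    ext v g
    simp [LinearIsometryEquiv.piLpCongrLeft_apply, Equiv.piCongrLeft']
    rfl
  map_mul' x y := by
    ext v g
    simp [LinearIsometryEquiv.piLpCongrLeft_apply, Equiv.piCongrLeft', mul_assoc]
    change v.ofLp (g * x⁻¹⁻¹ * y⁻¹⁻¹) = _
    simp [mul_assoc]

theorem regRep_apply {G : Type*} [Group G] [Fintype G] (x g : G) (v : EuclideanSpace ℂ G) :
    regRep G x v g = v (g * x) := by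
  simp [regRep, LinearIsometryEquiv.piLpCongrLeft_apply, Equiv.piCongrLeft']

theorem stab_rep {G : Type*} [Group G] [Fintype G] (A : Set G) (hA : A.Nonempty)
    (c η : ℝ) (hc : 0 < c) (hη : 0 < η) (hη2 : η < 1/2)
    (hS : c * Nat.card G ≤ (stR A (η^2)).ncard) :
    ∃ m : ℕ, 1 ≤ m ∧ (m : ℝ) ≤ 1 / (c * η^2) ∧ ∃ τ : G →* Matrix.unitaryGroup (Fin m) ℂ,
      ∀ x, (((A * {x}) ∆ A).ncard : ℝ) ≤ (4 * η + uDist m (τ x) 1)^2 * A.ncard := by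
  classical
  let f : EuclideanSpace ℂ G := WithLp.toLp 2 (fun g => if g ∈ A then 1 else 0)
  have hfapp : ∀ g, f g = if g ∈ A then 1 else 0 := fun g => rfl
  have hfn : ‖f‖^2 = A.ncard := by
    rw [EuclideanSpace.norm_sq_eq, Set.ncard_eq_toFinset_card', Finset.card_eq_sum_ones,
      Nat.cast_sum, ← Finset.sum_subset (Finset.subset_univ A.toFinset)]
    · refine Finset.sum_congr rfl fun g hg => ?_
      rw [Set.mem_toFinset] at hg
      simp [hfapp, hg]
    · intro g _ hg
      rw [Set.mem_toFinset] at hg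
      simp [hfapp, hg]
  have hfd : ∀ x, ‖regRep G x f - f‖^2 = ((A * {x}) ∆ A).ncard := by
    intro x
    have h1 : ((A * {x}) ∆ A).ncard = ((A * {x⁻¹}) ∆ A).ncard := by
      rw [← mul_singleton_ncard ((A * {x⁻¹}) ∆ A) x, symmDiff_mul_singleton, mul_assoc,
        Set.singleton_mul_singleton, inv_mul_cancel, Set.singleton_one, mul_one, symmDiff_comm]
    have hmem : ∀ g, g ∈ (A * {x⁻¹}) ∆ A ↔ (g * x ∈ A ∧ g ∉ A ∨ g ∈ A ∧ g * x ∉ A) := by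
      intro g
      rw [Set.mem_symmDiff, Set.mul_singleton]
      simp
    rw [h1, EuclideanSpace.norm_sq_eq, Set.ncard_eq_toFinset_card', Finset.card_eq_sum_ones,
      Nat.cast_sum, ← Finset.sum_subset (Finset.subset_univ ((A * {x⁻¹}) ∆ A).toFinset)]
    · refine Finset.sum_congr rfl fun g hg => ?_
      rw [Set.mem_toFinset, hmem] at hg
      rw [PiLp.sub_apply, regRep_apply, hfapp, hfapp]
      rcases hg with hg | hg <;> simp [hg]
    · intro g _ hg
      rw [Set.mem_toFinset, hmem] at hg
      rw [PiLp.sub_apply, regRep_apply, hfapp, hfapp]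
      by_cases h1 : g ∈ A <;> by_cases h2 : g * x ∈ A <;> simp [h1, h2] at hg ⊢
  have hApos : (0 : ℝ) < A.ncard := by
    exact_mod_cast (Set.ncard_pos (Set.toFinite A)).2 hA
  have hf : f ≠ 0 := by
    intro h
    rw [h] at hfn
    simp at hfn
    rw [← hfn] at hApos
    simp at hApos
  have hSeq : stR A (η^2) = {x : G | ‖regRep G x f - f‖ ≤ η * ‖f‖} := by
    ext x
    change (((A * {x}) ∆ A).ncard : ℝ) ≤ η^2 * A.ncard ↔ ‖regRep G x f - f‖ ≤ η * ‖f‖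
    rw [← hfd, ← hfn, ← mul_pow]
    exact pow_le_pow_iff_left₀ (norm_nonneg _) (by positivity) (by norm_num)
  rw [hSeq] at hS
  obtain ⟨m, hm1, hm2, τ, hτ⟩ := rep_approx (regRep G) f hf c η hc hη hη2 hS
  refine ⟨m, hm1, hm2, τ, fun x => ?_⟩
  rw [← hfd, ← hfn, ← mul_pow]
  exact pow_le_pow_left₀ (norm_nonneg _) (hτ x) 2

section Comb
open Finset

theorem sum_symm_count {G : Type*} [Group G] [DecidableEq G] (P Q B : Finset G)
    (hB : ∀ b ∈ B, b⁻¹ ∈ B) :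
    ∑ u ∈ P, #{b ∈ B | u * b ∈ Q} = ∑ f ∈ Q, #{b ∈ B | f * b ∈ P} := by
  have h1 : ∀ (R : Finset G) (u : G), #{b ∈ B | u * b ∈ R} = #{f ∈ R | u⁻¹ * f ∈ B} := by
    intro R u
    refine Finset.card_bij (fun b _ => u * b) ?_ ?_ ?_
    · intro b hb; simp at hb ⊢; exact ⟨hb.2, hb.1⟩
    · intro a _ b _ h; exact mul_left_cancel h
    · intro f hf; simp at hf; exact ⟨u⁻¹ * f, by simp [hf], by simp⟩
  simp only [h1]
  refine (Finset.sum_card_bipartiteAbove_eq_sum_card_bipartiteBelow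
    (fun u f => u⁻¹ * f ∈ B)).trans ?_
  refine Finset.sum_congr rfl fun f _ => ?_
  congr 1
  ext u
  simp only [Finset.mem_bipartiteBelow, Finset.mem_filter, and_congr_right_iff]
  intro _
  constructor
  · intro h; simpa using hB _ h
  · intro h; simpa using hB _ h

theorem bad_markov {G : Type*} [Group G] [Fintype G] [DecidableEq G] (A B S : Finset G)
    (hBne : B.Nonempty) (θ t : ℝ)
    (hθ : ∀ b ∈ B, (#{g : G | ¬ (g ∈ A ↔ g * b ∈ A)} : ℝ) ≤ θ * #A)
    (hS : ∀ g ∈ S, t * #B ≤ #{b ∈ B | ¬ (g ∈ A ↔ g * b ∈ A)}) :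
    t * #S ≤ θ * #A := by
  have hBpos : (0 : ℝ) < #B := by exact_mod_cast hBne.card_pos
  have h1 : #S * (t * #B) ≤ ∑ g ∈ S, (#{b ∈ B | ¬ (g ∈ A ↔ g * b ∈ A)} : ℝ) := by
    rw [← nsmul_eq_mul]; exact Finset.card_nsmul_le_sum _ _ _ hS
  have h2 : ∑ g ∈ S, #{b ∈ B | ¬ (g ∈ A ↔ g * b ∈ A)} ≤
      ∑ g : G, #{b ∈ B | ¬ (g ∈ A ↔ g * b ∈ A)} :=
    Finset.sum_le_sum_of_subset (Finset.subset_univ _)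
  have h3 : ∑ g : G, #{b ∈ B | ¬ (g ∈ A ↔ g * b ∈ A)} =
      ∑ b ∈ B, #{g : G | ¬ (g ∈ A ↔ g * b ∈ A)} :=
    Finset.sum_card_bipartiteAbove_eq_sum_card_bipartiteBelow (fun g b => ¬ (g ∈ A ↔ g * b ∈ A))
  have h4 : ∑ b ∈ B, (#{g : G | ¬ (g ∈ A ↔ g * b ∈ A)} : ℝ) ≤ #B * (θ * #A) := by
    rw [← nsmul_eq_mul]; exact Finset.sum_le_card_nsmul _ _ _ hθ
  rw [h3] at h2
  have h5 : ∑ g ∈ S, (#{b ∈ B | ¬ (g ∈ A ↔ g * b ∈ A)} : ℝ) ≤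
      ∑ b ∈ B, (#{g : G | ¬ (g ∈ A ↔ g * b ∈ A)} : ℝ) := by exact_mod_cast h2
  have h6 : #B * (t * #S) ≤ #B * (θ * #A) := by
    calc #B * (t * #S) = #S * (t * #B) := by ring
      _ ≤ _ := h1.trans (h5.trans h4)
  exact le_of_mul_le_mul_left h6 hBpos

theorem bad_total {G : Type*} [Group G] [Fintype G] [DecidableEq G] (A B S : Finset G)
    (θ : ℝ)
    (hθ : ∀ b ∈ B, (#{g : G | ¬ (g ∈ A ↔ g * b ∈ A)} : ℝ) ≤ θ * #A) :
    ∑ g ∈ S, (#{b ∈ B | ¬ (g ∈ A ↔ g * b ∈ A)} : ℝ) ≤ #B * (θ * #A) := by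
  have h2 : ∑ g ∈ S, #{b ∈ B | ¬ (g ∈ A ↔ g * b ∈ A)} ≤
      ∑ g : G, #{b ∈ B | ¬ (g ∈ A ↔ g * b ∈ A)} :=
    Finset.sum_le_sum_of_subset (Finset.subset_univ _)
  have h3 : ∑ g : G, #{b ∈ B | ¬ (g ∈ A ↔ g * b ∈ A)} =
      ∑ b ∈ B, #{g : G | ¬ (g ∈ A ↔ g * b ∈ A)} :=
    Finset.sum_card_bipartiteAbove_eq_sum_card_bipartiteBelow (fun g b => ¬ (g ∈ A ↔ g * b ∈ A))
  have h4 : ∑ b ∈ B, (#{g : G | ¬ (g ∈ A ↔ g * b ∈ A)} : ℝ) ≤ #B * (θ * #A) := by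
    rw [← nsmul_eq_mul]; exact Finset.sum_le_card_nsmul _ _ _ hθ
  rw [h3] at h2
  exact le_trans (by exact_mod_cast h2) h4

theorem greedy_cover {G : Type*} [Group G] [Fintype G] [DecidableEq G] (A B : Finset G)
    (hBne : B.Nonempty) (hBsymm : ∀ b ∈ B, b⁻¹ ∈ B) (ε : ℝ) (hε : 0 < ε) (hε1 : ε < 1)
    (hθ : ∀ b ∈ B, (#{g : G | ¬ (g ∈ A ↔ g * b ∈ A)} : ℝ) ≤ (ε^3/2048) * #A) :
    ∃ F ⊆ A, (ε / 16) * #F * #B ≤ (#A : ℝ) ∧ (#(A \ (F * B)) : ℝ) ≤ (ε/4) * #A ∧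
      (#((F * B) \ A) : ℝ) ≤ (ε/4) * #A := by
  have hBpos : (0 : ℝ) < #B := by exact_mod_cast hBne.card_pos
  let A' : Finset G := {g ∈ A | (#{b ∈ B | ¬ (g ∈ A ↔ g * b ∈ A)} : ℝ) ≤ (ε^2/64) * #B}
  have hA'A : A' ⊆ A := Finset.filter_subset _ _
  have hAA' : (#(A \ A') : ℝ) ≤ ε/32 * #A := by
    have h := bad_markov A B (A \ A') hBne (ε^3/2048) (ε^2/64) hθ (by
      intro g hg
      simp only [A', Finset.mem_sdiff, Finset.mem_filter, not_and, not_le] at hg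
      exact (hg.2 hg.1).le)
    have h2 : ε^2/64 * #(A \ A') ≤ ε^2/64 * (ε/32 * #A) := by
      refine h.trans (le_of_eq ?_); ring
    exact le_of_mul_le_mul_left h2 (by positivity)
  let P : Finset G → Prop := fun F => F ⊆ A' ∧ (ε/16) * #F * #B ≤ (#((F * B) ∩ A) : ℝ)
  obtain ⟨F, -, hF⟩ := (Set.toFinite {F : Finset G | P F}).exists_le_maximal
      (show ∅ ∈ {F : Finset G | P F} by simp [P])
  have hPF : P F := hF.prop
  have hFcard : (ε / 16) * #F * #B ≤ (#A : ℝ) :=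
    hPF.2.trans (by exact_mod_cast Finset.card_le_card Finset.inter_subset_right)
  refine ⟨F, hPF.1.trans hA'A, hFcard, ?_, ?_⟩
  · by_contra hU
    rw [not_le] at hU
    set U := A \ (F * B) with hUd
    have hUA : U ⊆ A := Finset.sdiff_subset
    -- lower bound for the double count
    have e1 : ∀ u ∈ U, (#B : ℝ) ≤ #{b ∈ B | u * b ∈ A'} + #{b ∈ B | u * b ∈ A \ A'} +
        #{b ∈ B | ¬ (u ∈ A ↔ u * b ∈ A)} := by
      intro u hu
      have hsub : B ⊆ ({b ∈ B | u * b ∈ A'} ∪ {b ∈ B | u * b ∈ A \ A'}) ∪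
          {b ∈ B | ¬ (u ∈ A ↔ u * b ∈ A)} := by
        intro b hb
        have := hUA hu
        simp only [Finset.mem_union, Finset.mem_filter, Finset.mem_sdiff]
        tauto
      have := (Finset.card_le_card hsub).trans
        ((Finset.card_union_le _ _).trans (Nat.add_le_add_right (Finset.card_union_le _ _) _))
      exact_mod_cast this
    have e2 : (#U : ℝ) * #B ≤ ∑ u ∈ U, (#{b ∈ B | u * b ∈ A'} : ℝ) +
        ∑ u ∈ U, (#{b ∈ B | u * b ∈ A \ A'} : ℝ) +
        ∑ u ∈ U, (#{b ∈ B | ¬ (u ∈ A ↔ u * b ∈ A)} : ℝ) := by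
      rw [← Finset.sum_add_distrib, ← Finset.sum_add_distrib, ← nsmul_eq_mul]
      exact Finset.card_nsmul_le_sum _ _ _ e1
    have e3 := bad_total A B U _ hθ
    have e4 : ∑ u ∈ U, (#{b ∈ B | u * b ∈ A \ A'} : ℝ) ≤ #(A \ A') * #B := by
      have h := sum_symm_count U (A \ A') B hBsymm
      have h' : ∑ f ∈ A \ A', #{b ∈ B | f * b ∈ U} ≤ #(A \ A') * #B := by
        rw [← smul_eq_mul]
        exact Finset.sum_le_card_nsmul _ _ _ (fun f _ => Finset.card_filter_le _ _)
      rw [← h] at h'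
      exact_mod_cast h'
    have e5 : ∑ u ∈ U, (#{b ∈ B | u * b ∈ A'} : ℝ) = ∑ f ∈ A', (#{b ∈ B | f * b ∈ U} : ℝ) := by
      exact_mod_cast sum_symm_count U A' B hBsymm
    have e6 : ∃ f ∈ A', ε/16 * #B ≤ (#{b ∈ B | f * b ∈ U} : ℝ) := by
      by_contra hcon
      push Not at hcon
      have h := Finset.sum_le_card_nsmul A' (fun f => (#{b ∈ B | f * b ∈ U} : ℝ)) _
        (fun f hf => (hcon f hf).le)
      rw [nsmul_eq_mul, ← e5] at h
      have hA'le : (#A' : ℝ) ≤ #A := by exact_mod_cast Finset.card_le_card hA'A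
      have hA0 : (0 : ℝ) ≤ #A := by positivity
      have h' : (#A' : ℝ) * (ε/16 * #B) ≤ #A * (ε/16 * #B) :=
        mul_le_mul_of_nonneg_right hA'le (by positivity)
      have h2 : (#(A \ A') : ℝ) * #B ≤ (ε/32 * #A) * #B :=
        mul_le_mul_of_nonneg_right hAA' hBpos.le
      have h3 : (ε/4 * #A) * #B < (#U : ℝ) * #B := mul_lt_mul_of_pos_right hU hBpos
      have h4 : (#B : ℝ) * (ε^3/2048 * #A) ≤ #B * (ε/32 * #A) := by
        have : ε^3 ≤ ε := by nlinarith [mul_pos hε hε]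
        have : ε^3/2048 ≤ ε/32 := by linarith
        gcongr
      have h5 : (0 : ℝ) ≤ ε * #A * #B := by positivity
      nlinarith
    obtain ⟨f, hfA', hf⟩ := e6
    have hfpos : 0 < #{b ∈ B | f * b ∈ U} := by
      have : (0 : ℝ) < #{b ∈ B | f * b ∈ U} := lt_of_lt_of_le (by positivity) hf
      exact_mod_cast this
    have hfF : f ∉ F := by
      intro hfF
      obtain ⟨b, hb⟩ := Finset.card_pos.1 hfpos
      rw [Finset.mem_filter, hUd, Finset.mem_sdiff] at hb
      exact hb.2.2 (Finset.mul_mem_mul hfF hb.1)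
    have hnew : P (insert f F) := by
      refine ⟨Finset.insert_subset hfA' hPF.1, ?_⟩
      have hcardim : #(Finset.image (fun b => f * b) {b ∈ B | f * b ∈ U}) =
          #{b ∈ B | f * b ∈ U} := Finset.card_image_of_injective _ (mul_right_injective f)
      have hdisj : Disjoint ((F * B) ∩ A) (Finset.image (fun b => f * b) {b ∈ B | f * b ∈ U}) := by
        rw [Finset.disjoint_left]
        intro g hg hg2
        rw [Finset.mem_image] at hg2
        obtain ⟨b, hb, rfl⟩ := hg2
        rw [Finset.mem_filter, hUd, Finset.mem_sdiff] at hb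
        exact hb.2.2 (Finset.mem_inter.1 hg).1
      have hsub : ((F * B) ∩ A) ∪ (Finset.image (fun b => f * b) {b ∈ B | f * b ∈ U}) ⊆
          (insert f F * B) ∩ A := by
        refine Finset.union_subset ?_ ?_
        · exact Finset.inter_subset_inter_right
            (Finset.mul_subset_mul_right (Finset.subset_insert _ _))
        · intro g hg
          rw [Finset.mem_image] at hg
          obtain ⟨b, hb, rfl⟩ := hg
          rw [Finset.mem_filter] at hb
          exact Finset.mem_inter.2
            ⟨Finset.mul_mem_mul (Finset.mem_insert_self _ _) hb.1, hUA hb.2⟩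
      have hc := Finset.card_le_card hsub
      rw [Finset.card_union_of_disjoint hdisj, hcardim] at hc
      have hc' : (#((F * B) ∩ A) : ℝ) + #{b ∈ B | f * b ∈ U} ≤ #((insert f F * B) ∩ A) := by
        exact_mod_cast hc
      rw [Finset.card_insert_of_notMem hfF]
      push_cast
      have := hPF.2
      nlinarith
    exact hfF (hF.le_of_ge hnew (Finset.subset_insert _ _) (Finset.mem_insert_self _ _))
  · have hsub : (F * B) \ A ⊆ F.biUnion
        (fun f => Finset.image (fun b => f * b) {b ∈ B | ¬ (f ∈ A ↔ f * b ∈ A)}) := by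
      intro g hg
      rw [Finset.mem_sdiff, Finset.mem_mul] at hg
      obtain ⟨⟨f, hf, b, hb, rfl⟩, hgA⟩ := hg
      have hfA : f ∈ A := hA'A (hPF.1 hf)
      rw [Finset.mem_biUnion]
      refine ⟨f, hf, Finset.mem_image.2 ⟨b, ?_, rfl⟩⟩
      rw [Finset.mem_filter]
      tauto
    have h1 : #((F * B) \ A) ≤ ∑ f ∈ F, #{b ∈ B | ¬ (f ∈ A ↔ f * b ∈ A)} :=
      (Finset.card_le_card hsub).trans (Finset.card_biUnion_le.trans
        (Finset.sum_le_sum fun f _ => Finset.card_image_le))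
    have h2 : (#((F * B) \ A) : ℝ) ≤ ∑ f ∈ F, (#{b ∈ B | ¬ (f ∈ A ↔ f * b ∈ A)} : ℝ) := by
      exact_mod_cast h1
    have h3 : ∑ f ∈ F, (#{b ∈ B | ¬ (f ∈ A ↔ f * b ∈ A)} : ℝ) ≤ #F * ((ε^2/64) * #B) := by
      rw [← nsmul_eq_mul]
      exact Finset.sum_le_card_nsmul _ _ _ (fun f hf => (Finset.mem_filter.1 (hPF.1 hf)).2)
    calc (#((F * B) \ A) : ℝ) ≤ #F * ((ε^2/64) * #B) := h2.trans h3
      _ = (ε/4) * ((ε / 16) * #F * #B) := by ring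
      _ ≤ (ε/4) * #A := mul_le_mul_of_nonneg_left hFcard (by positivity)

end Comb

theorem comb_end {G : Type*} [Group G] [Fintype G] (A B : Set G) (hA : A.Nonempty)
    (hB1 : (1 : G) ∈ B) (hBsymm : ∀ b ∈ B, b⁻¹ ∈ B) (ε : ℝ) (hε : 0 < ε) (hε1 : ε < 1)
    (hst : B ⊆ stR A (ε^3/2048)) (N : ℝ) (hN : (Nat.card G : ℝ) ≤ N * B.ncard) :
    B ⊆ stR A ε ∧
      (∃ F ⊆ A, (F.ncard : ℝ) ≤ 16 * N / ε ∧ ((A ∆ (F * B)).ncard : ℝ) < ε * A.ncard) ∧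
        ((Zl A B ε).ncard : ℝ) ≤ ε * A.ncard := by
  classical
  have hcube : ε^3 ≤ ε^2 := by nlinarith [mul_pos hε hε]
  have hsq : ε^2 ≤ ε := by nlinarith
  have hApos : (0 : ℝ) < A.ncard := by
    exact_mod_cast (Set.ncard_pos (Set.toFinite A)).2 hA
  have hBpos : (0 : ℝ) < B.ncard := by
    exact_mod_cast (Set.ncard_pos (Set.toFinite B)).2 ⟨1, hB1⟩
  have hθ : ∀ b ∈ B.toFinset, ((Finset.univ.filter
      (fun g : G => ¬ (g ∈ A.toFinset ↔ g * b ∈ A.toFinset))).card : ℝ) ≤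
      (ε^3/2048) * A.toFinset.card := by
    intro b hb
    rw [Set.mem_toFinset] at hb
    have h := hst (hBsymm b hb)
    change (((A * {b⁻¹}) ∆ A).ncard : ℝ) ≤ (ε^3/2048) * A.ncard at h
    rw [Set.ncard_eq_toFinset_card', Set.ncard_eq_toFinset_card' A] at h
    refine le_trans (le_of_eq ?_) h
    congr 2
    ext g
    simp only [Finset.mem_filter, Finset.mem_univ, true_and, Set.mem_toFinset, Set.mem_symmDiff,
      Set.mul_singleton]
    simp
    tauto
  have hBne : B.toFinset.Nonempty := ⟨1, by simpa using hB1⟩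
  refine ⟨?_, ?_, ?_⟩
  · refine hst.trans fun x hx => ?_
    change (((A * {x}) ∆ A).ncard : ℝ) ≤ (ε^3/2048) * A.ncard at hx
    change (((A * {x}) ∆ A).ncard : ℝ) ≤ ε * A.ncard
    refine hx.trans (mul_le_mul_of_nonneg_right ?_ hApos.le)
    linarith
  · obtain ⟨F, hFA, hFc, h1, h2⟩ := greedy_cover A.toFinset B.toFinset hBne
      (by simpa using hBsymm) ε hε hε1 hθ
    have hFA' : (F : Set G) ⊆ A := fun x hx => Set.mem_toFinset.1 (hFA hx)
    refine ⟨F, hFA', ?_, ?_⟩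
    · rw [← Set.ncard_eq_toFinset_card', ← Set.ncard_eq_toFinset_card'] at hFc
      rw [Set.ncard_coe_finset, le_div_iff₀ hε]
      have hAG : (A.ncard : ℝ) ≤ Nat.card G := by exact_mod_cast Set.ncard_le_card A
      have h3 : (F.card * ε) * B.ncard ≤ (16 * N) * B.ncard := by nlinarith
      exact le_of_mul_le_mul_right h3 hBpos
    · have hAcard : (A.toFinset.card : ℝ) = A.ncard := by rw [Set.ncard_eq_toFinset_card']
      have heq : A ∆ ((F : Set G) * B) =
          ((A.toFinset \ (F * B.toFinset) ∪ (F * B.toFinset) \ A.toFinset : Finset G) : Set G) := by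
        rw [Set.symmDiff_def]; push_cast; simp
      rw [heq, Set.ncard_coe_finset]
      rw [hAcard] at h1 h2
      have h3 : ((A.toFinset \ (F * B.toFinset) ∪ (F * B.toFinset) \ A.toFinset).card : ℝ) ≤
          (A.toFinset \ (F * B.toFinset)).card + ((F * B.toFinset) \ A.toFinset).card := by
        exact_mod_cast Finset.card_union_le _ _
      nlinarith [mul_pos hε hApos]
  · have h := bad_markov A.toFinset B.toFinset (Zl A B ε).toFinset hBne (ε^3/2048) ε hθ (by
      intro g hg
      rw [Set.mem_toFinset] at hg
      have hg' : ε * B.ncard ≤ min (((g • B) ∩ A).ncard : ℝ) (((g • B) \ A).ncard : ℝ) := hg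
      rw [← Set.ncard_eq_toFinset_card']
      have hmem : ∀ x, x ∈ g • B ↔ g⁻¹ * x ∈ B := by
        intro x; rw [Set.mem_smul_set_iff_inv_smul_mem, smul_eq_mul]
      have him : ∀ S : Set G, S ⊆ g • B → (∀ x ∈ S, ¬ (g ∈ A ↔ x ∈ A)) → S.ncard ≤
          (B.toFinset.filter (fun b => ¬ (g ∈ A.toFinset ↔ g * b ∈ A.toFinset))).card := by
        intro S hS hS2
        rw [Set.ncard_eq_toFinset_card']
        refine Finset.card_le_card_of_injOn (fun x => g⁻¹ * x) ?_ ?_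
        · intro x hx
          have hx' : x ∈ S := by simpa using hx
          have := hS2 x hx'
          have := (hmem x).1 (hS hx')
          simp
          tauto
        · intro x _ y _ h; exact mul_left_cancel h
      by_cases hgA : g ∈ A
      · refine (hg'.trans (min_le_right _ _)).trans ?_
        exact_mod_cast him _ Set.sdiff_subset (fun x hx => by have := hx.2; tauto)
      · refine (hg'.trans (min_le_left _ _)).trans ?_
        exact_mod_cast him _ Set.inter_subset_left (fun x hx => by have := hx.2; tauto))
    rw [← Set.ncard_eq_toFinset_card', ← Set.ncard_eq_toFinset_card'] at h
    have h2 : ε * (Zl A B ε).ncard ≤ ε * (ε * A.ncard) := by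
      refine h.trans ?_
      rw [← mul_assoc]
      refine mul_le_mul_of_nonneg_right ?_ hApos.le
      nlinarith [mul_pos hε hε]
    exact le_of_mul_le_mul_left h2 hε

/-- Theorem 4.1 of the paper: for `d ≥ 0` and `α, ε ∈ (0,1)` there is a
constant `C` such that every nonempty `A ⊆ G` (`G` a finite group) with
`max(VC^ℓ_A(A), VC^r_A(A)) ≤ d` and `|A| ≥ α|G|` admits a `(δ,m,n)`-Bohr neighborhood
`B ⊆ St^r_ε(A)` of complexity at most `C` satisfying structure and regularity. -/
theorem nip_arithmetic_regularity' (d : ℕ) (α ε : ℝ)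
    (hα0 : 0 < α) (hα1 : α < 1) (hε0 : 0 < ε) (hε1 : ε < 1) :
    ∃ C : ℝ, ∀ (G : Type*) [Group G] [Fintype G] (A : Set G), A.Nonempty →
      vcDim (leftFam A A) ≤ (d : ℕ∞) → vcDim (rightFam A A) ≤ (d : ℕ∞) →
      α * Nat.card G ≤ A.ncard →
      ∃ (δ : ℝ) (m n : ℕ) (B : Set G),
        0 < δ ∧ δ < 1 ∧ 1 ≤ m ∧ 1 ≤ n ∧
        1 / δ ≤ C ∧ (m : ℝ) ≤ C ∧ (n : ℝ) ≤ C ∧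
        IsBohrNbhd δ m n B ∧ B ⊆ stR A ε ∧
        (∃ F ⊆ A, (F.ncard : ℝ) ≤ C ∧
          ((A ∆ (F * B)).ncard : ℝ) < ε * A.ncard) ∧
        ((Zl A B ε).ncard : ℝ) ≤ ε * A.ncard := by
  classical
  obtain ⟨θ, hθd⟩ : ∃ θ : ℝ, θ = ε^3/2048 := ⟨_, rfl⟩
  have hcube : ε^3 < 1 := pow_lt_one₀ hε0.le hε1 (by norm_num)
  have hθ0 : 0 < θ := by rw [hθd]; positivity
  have hθ1 : θ < 1/2048 := by rw [hθd]; linarith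
  obtain ⟨η, hηd⟩ : ∃ η : ℝ, η = θ/5 := ⟨_, rfl⟩
  have hη0 : 0 < η := by rw [hηd]; positivity
  have hη1 : η < 1/2 := by rw [hηd]; linarith
  have hη2 : η^2 < 1 := by nlinarith
  obtain ⟨N, hN1, hN⟩ := stab_large d α (η^2) hα0 hα1 (by positivity) hη2
  have hNpos : (0 : ℝ) < N := by exact_mod_cast hN1
  have hc0 : 0 < α / N := by positivity
  choose Nb hNb using fun m : ℕ => bohr_exists m η hη0 hη1.le
  let D : ℝ := 1 / (α / N * η^2)
  let Q : ℕ := ∑ m ∈ Finset.range (⌊D⌋₊ + 1), Nb m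
  have hD0 : 0 < D := by positivity
  have hη0' : 0 < 1 / η := by positivity
  have hQ0 : (0 : ℝ) ≤ Q := by positivity
  have hQ1 : (0 : ℝ) ≤ 16 * Q / ε := by positivity
  refine ⟨1 / η + D + Q + 16 * Q / ε, fun G _ _ A hA _ hvc hαA => ?_⟩
  have hS : α / N * Nat.card G ≤ (stR A (η^2)).ncard := by
    have h := hN G A hA hvc hαA
    rw [div_mul_eq_mul_div, div_le_iff₀ hNpos]
    linarith
  obtain ⟨m, hm1, hmD, τ₀, hτ⟩ := stab_rep A hA (α / N) η hc0 hη0 hη1 hS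
  obtain ⟨n, hn1, hnN, hBohr, hcard⟩ := hNb m G τ₀
  have hNbQ : Nb m ≤ Q := by
    refine Finset.single_le_sum (f := Nb) (fun _ _ => Nat.zero_le _) ?_
    rw [Finset.mem_range, Nat.lt_succ_iff]
    exact Nat.le_floor hmD
  have hNbQ' : (Nb m : ℝ) ≤ Q := by exact_mod_cast hNbQ
  have hnQ : (n : ℝ) ≤ Q := by exact_mod_cast hnN.trans hNbQ
  have hcard' : (Nat.card G : ℝ) ≤ Q * {g : G | uDist m (τ₀ g) 1 < η}.ncard := by
    exact_mod_cast hcard.trans (Nat.mul_le_mul_right _ hNbQ)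
  obtain ⟨hB, ⟨F, hFA, hFc, hF⟩, hZ⟩ := comb_end A {g : G | uDist m (τ₀ g) 1 < η} hA
    (by
      change uDist m (τ₀ 1) 1 < η
      rw [map_one]
      simpa [uDist] using hη0)
    (by
      intro b hb
      change uDist m (τ₀ b⁻¹) 1 < η
      rw [map_inv, uDist_inv]
      exact hb)
    ε hε0 hε1
    (by
      intro x hx
      have hx' : uDist m (τ₀ x) 1 < η := hx
      have hx0 : 0 ≤ uDist m (τ₀ x) 1 := norm_nonneg _
      change (((A * {x}) ∆ A).ncard : ℝ) ≤ (ε^3/2048) * A.ncard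
      refine (hτ x).trans (mul_le_mul_of_nonneg_right ?_ (by positivity))
      rw [← hθd]
      have h5 : 4 * η + uDist m (τ₀ x) 1 ≤ θ := by linarith
      have h6 : 0 ≤ 4 * η + uDist m (τ₀ x) 1 := by positivity
      nlinarith)
    Q hcard'
  refine ⟨η, m, n, _, hη0, by linarith, hm1, hn1, by linarith, ?_, by linarith, hBohr, hB,
    ⟨F, hFA, by linarith, hF⟩, hZ⟩
  have : (m : ℝ) ≤ D := hmD
  linarith
end

section
/- Let G be a group and A ⊆ G a nonempty finite set. Let d = VC^ℓ_A(A), k = |A²|/|A|, and m = |AA⁻¹|/|A|, and assume d ≥ 1. Then for any integers n ≥ u ≥ 2 and any ε ∈ (0,1), there is a symmetric set B ⊆ G such that |B^u| ≤ u^{d(d+1)}|B|, B^n ⊆ St^ℓ_ε(A), and |A| ≤ m^{1/d}(30kn/ε)^{d+1}|B|. -/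
open scoped Pointwise symmDiff

open Finset in
/-- one-inclusion edges in direction `i`. -/
def afzEdges {ι : Type*} [DecidableEq ι] (Q : Finset (Finset ι)) (i : ι) : Finset (Finset ι) :=
  Q.filter (fun q => i ∉ q ∧ insert i q ∈ Q)

open Finset in
lemma afz_edges_le {ι : Type*} [DecidableEq ι] (U : Finset ι) : ∀ (Q : Finset (Finset ι)) (d : ℕ),
    (∀ q ∈ Q, q ⊆ U) → (∀ S, Q.Shatters S → S.card ≤ d) →
    ∑ i ∈ U, (afzEdges Q i).card ≤ d * Q.card := by
  induction U using Finset.induction_on with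
  | empty => intro Q d _ _; simp
  | insert a U ha ih =>
    intro Q d hQ hS
    set N := Q.nonMemberSubfamily a with hN
    set M := Q.memberSubfamily a with hM
    have hNU : ∀ q ∈ N, q ⊆ U := by
      intro q hq
      rw [hN, mem_nonMemberSubfamily] at hq
      have := hQ q hq.1
      intro x hx
      have h1 := this hx
      rw [mem_insert] at h1
      rcases h1 with rfl | h1
      · exact absurd hx hq.2
      · exact h1
    have hMU : ∀ q ∈ M, q ⊆ U := by
      intro q hq
      rw [hM, mem_memberSubfamily] at hq
      have := hQ _ hq.1
      intro x hx
      have h1 := this (mem_insert_of_mem hx)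
      rw [mem_insert] at h1
      rcases h1 with rfl | h1
      · exact absurd hx hq.2
      · exact h1
    have hcard : Q.card = (N ∪ M).card + (N ∩ M).card := by
      rw [card_union_add_card_inter, add_comm]
      exact (card_memberSubfamily_add_card_nonMemberSubfamily a Q).symm
    have hUnion : ∀ S, (N ∪ M).Shatters S → S.card ≤ d := by
      intro S h
      apply hS
      have haS : a ∉ S := by
        intro haS
        obtain ⟨q, hq, hqS⟩ := h (Subset.refl S)
        have : a ∈ q := by
          have : a ∈ S ∩ q := by rw [hqS]; exact haS
          exact (mem_inter.1 this).2
        rw [mem_union] at hq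
        rcases hq with hq | hq
        · exact (mem_nonMemberSubfamily.1 hq).2 this
        · exact (mem_memberSubfamily.1 hq).2 this
      intro T hT
      obtain ⟨q, hq, hqT⟩ := h hT
      rw [mem_union] at hq
      rcases hq with hq | hq
      · exact ⟨q, (mem_nonMemberSubfamily.1 hq).1, hqT⟩
      · refine ⟨insert a q, (mem_memberSubfamily.1 hq).1, ?_⟩
        rw [inter_insert_of_notMem haS, hqT]
    have hInter : ∀ S, (N ∩ M).Shatters S → S.card + 1 ≤ d := by
      intro S h
      have haS : a ∉ S := by
        intro haS
        obtain ⟨q, hq, hqS⟩ := h (Subset.refl S)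
        have : a ∈ q := by
          have : a ∈ S ∩ q := by rw [hqS]; exact haS
          exact (mem_inter.1 this).2
        exact (mem_nonMemberSubfamily.1 (mem_inter.1 hq).1).2 this
      rw [← card_insert_of_notMem haS]
      apply hS
      intro T hT
      have hT' : T.erase a ⊆ S := by
        intro x hx
        rw [mem_erase] at hx
        have := hT hx.2
        rw [mem_insert] at this
        tauto
      obtain ⟨q, hq, hqT⟩ := h hT'
      rw [mem_inter] at hq
      have hq1 := mem_nonMemberSubfamily.1 hq.1
      have hq2 := mem_memberSubfamily.1 hq.2
      by_cases haT : a ∈ T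
      · refine ⟨insert a q, hq2.1, ?_⟩
        rw [← insert_inter_distrib, hqT, insert_erase haT]
      · refine ⟨q, hq1.1, ?_⟩
        rw [insert_inter_of_notMem hq1.2, hqT, erase_eq_of_notMem haT]
    have hdirA : (afzEdges Q a).card = (N ∩ M).card := by
      congr 1
      ext q
      simp only [afzEdges, mem_filter, hN, hM, mem_inter, mem_nonMemberSubfamily,
        mem_memberSubfamily]
      tauto
    have hdir : ∀ i ∈ U, (afzEdges Q i).card ≤
        (afzEdges (N ∪ M) i).card + (afzEdges (N ∩ M) i).card := by
      intro i hi
      have hia : i ≠ a := fun h => ha (h ▸ hi)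
      have h1 : (afzEdges Q i).card ≤ (afzEdges N i).card + (afzEdges M i).card := by
        rw [← card_filter_add_card_filter_not (s := afzEdges Q i) (fun q => a ∉ q)]
        apply add_le_add
        · apply card_le_card
          intro q
          simp only [afzEdges, mem_filter, hN, mem_nonMemberSubfamily, mem_insert]
          grind
        · apply card_le_card_of_injOn (fun q => q.erase a)
          · intro q hq
            simp only [afzEdges, coe_filter, mem_filter, Set.mem_ofPred_eq, not_not] at hq
            simp only [afzEdges, coe_filter, hM, mem_memberSubfamily, Set.mem_ofPred_eq]
            obtain ⟨⟨hq1, hq2, hq3⟩, hq4⟩ := hq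
            refine ⟨⟨?_, ?_⟩, ?_, ?_, ?_⟩
            · rwa [insert_erase hq4]
            · simp
            · simp [hq2]
            · rw [insert_comm, insert_erase hq4]; exact hq3
            · simp [hia.symm]
          · intro q hq q' hq' h
            simp only [coe_filter, Set.mem_ofPred_eq, not_not] at hq hq'
            have h : q.erase a = q'.erase a := h
            rw [← insert_erase hq.2, h, insert_erase hq'.2]
      refine h1.trans ?_
      rw [← card_union_add_card_inter]
      apply add_le_add
      · apply card_le_card
        intro q
        simp only [afzEdges, mem_filter, mem_union]
        tauto
      · apply card_le_card
        intro q
        simp only [afzEdges, mem_filter, mem_inter]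
        tauto
    rw [sum_insert ha, hdirA]
    have e1 := ih (N ∪ M) d (by intro q hq; rcases mem_union.1 hq with h | h; exacts [hNU q h, hMU q h]) hUnion
    have e2 : (N ∩ M).card + ∑ i ∈ U, (afzEdges (N ∩ M) i).card ≤ d * (N ∩ M).card := by
      rcases (N ∩ M).eq_empty_or_nonempty with h | ⟨q0, hq0⟩
      · rw [h]; simp [afzEdges]
      · have hd : 1 ≤ d := by
          have := hInter ∅ (by
            intro T hT
            refine ⟨q0, hq0, ?_⟩
            rw [subset_empty.1 hT]; simp)
          simpa using this
        obtain ⟨d', rfl⟩ := Nat.exists_eq_add_of_le' hd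
        have := ih (N ∩ M) d' (fun q hq => hNU q (mem_inter.1 hq).1) (fun S h => by
          have := hInter S h; omega)
        nlinarith
    have e3 := sum_le_sum hdir
    rw [sum_add_distrib] at e3
    rw [hcard]
    nlinarith

open Finset in
lemma afz_min_sum (a b M : ℕ) (ha : a ≤ M) :
    min a b = ∑ t ∈ range M, if t < a ∧ t < b then 1 else 0 := by
  rw [sum_boole]
  have : (range M).filter (fun t => t < a ∧ t < b) = range (min a b) := by
    ext t; simp; omega
  rw [this]; simp

open Finset in
/-- Weighted version. -/
lemma afz_weighted {ι : Type*} [DecidableEq ι] [Fintype ι] (w : Finset ι → ℕ) (d : ℕ)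
    (hS : ∀ S, (univ.filter (fun q => 0 < w q)).Shatters S → S.card ≤ d) :
    ∑ i : ι, ∑ q ∈ univ.filter (fun q : Finset ι => i ∉ q), min (w q) (w (insert i q))
      ≤ d * ∑ q, w q := by
  set M := ∑ q, w q with hM
  have hwM : ∀ q, w q ≤ M := fun q => single_le_sum (f := w) (fun _ _ => Nat.zero_le _) (mem_univ q)
  have h1 : ∀ t, ∑ i : ι, (afzEdges (univ.filter (fun q => t < w q)) i).card ≤
      d * (univ.filter (fun q => t < w q)).card := by
    intro t
    apply afz_edges_le univ
    · intro q _; exact subset_univ q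
    · intro S h
      apply hS
      apply h.mono_left
      intro q; simp; omega
  have h2 : M = ∑ t ∈ range M, (univ.filter (fun q => t < w q)).card := by
    simp_rw [card_filter]
    rw [sum_comm, hM]
    apply sum_congr rfl
    intro q _
    have := afz_min_sum (w q) (w q) M (hwM q)
    simpa using this
  calc _ = ∑ i : ι, ∑ t ∈ range M, (afzEdges (univ.filter (fun q => t < w q)) i).card := by
        apply sum_congr rfl
        intro i _
        have : ∀ t, (afzEdges (univ.filter (fun q => t < w q)) i).card =
            ∑ q ∈ univ.filter (fun q : Finset ι => i ∉ q),
              if t < w q ∧ t < w (insert i q) then 1 else 0 := by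
          intro t
          rw [← card_filter, filter_filter]
          congr 1
          ext q
          simp [afzEdges]; tauto
        simp_rw [this]
        rw [sum_comm]
        apply sum_congr rfl
        intro q _
        exact afz_min_sum _ _ _ (hwM q)
    _ = ∑ t ∈ range M, ∑ i : ι, (afzEdges (univ.filter (fun q => t < w q)) i).card := sum_comm
    _ ≤ ∑ t ∈ range M, d * (univ.filter (fun q => t < w q)).card := sum_le_sum (fun t _ => h1 t)
    _ = d * M := by rw [← mul_sum, ← h2]

open Finset Classical in
noncomputable def afzTrace {α β ι : Type*} [Fintype ι] (R : β → α → Prop) (σ : ι → α) (f : β) :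
    Finset ι := univ.filter (fun i => R f (σ i))

open Finset Classical in
lemma afz_trace_vc {α β ι : Type*} [Fintype ι] (R : β → α → Prop) (F : Finset β) (d : ℕ)
    (hVC : ∀ S : Finset α, (∀ T ⊆ S, ∃ f ∈ F, ∀ a ∈ S, (R f a ↔ a ∈ T)) → S.card ≤ d)
    (σ : ι → α) (S : Finset ι) (hS : (F.image (afzTrace R σ)).Shatters S) : S.card ≤ d := by
  have hS' : ∀ T ⊆ S, ∃ f ∈ F, ∀ i ∈ S, (R f (σ i) ↔ i ∈ T) := by
    intro T hT
    obtain ⟨q, hq, hqT⟩ := hS hT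
    obtain ⟨f, hf, rfl⟩ := mem_image.1 hq
    refine ⟨f, hf, fun i hi => ?_⟩
    rw [← hqT]
    simp [afzTrace, hi]
  have hinj : Set.InjOn σ S := by
    intro i hi j hj hij
    by_contra hne
    obtain ⟨f, hf, h⟩ := hS' {i} (by simpa using hi)
    have h1 := (h i hi).2 (by simp)
    rw [hij] at h1
    have := (h j hj).1 h1
    simp at this
    exact hne this.symm
  rw [← card_image_of_injOn hinj]
  apply hVC
  intro T hT
  obtain ⟨f, hf, h⟩ := hS' (S.filter (fun i => σ i ∈ T)) (filter_subset _ _)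
  refine ⟨f, hf, fun a ha => ?_⟩
  obtain ⟨i, hi, rfl⟩ := mem_image.1 ha
  rw [h i hi]; simp [hi]

open Finset Classical in
lemma afz_sauer {ι : Type*} [Fintype ι] (Q : Finset (Finset ι)) (d : ℕ)
    (hS : ∀ S, Q.Shatters S → S.card ≤ d) :
    Q.card ≤ ∑ k ∈ range (d + 1), (Fintype.card ι).choose k := by
  refine (card_le_card_shatterer Q).trans (card_shatterer_le_sum_vcDim.trans ?_)
  apply sum_le_sum_of_subset
  intro k hk
  have : Q.vcDim ≤ d := by
    unfold Finset.vcDim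
    apply Finset.sup_le
    intro S h
    exact hS S (mem_shatterer.1 h)
  simp at hk ⊢
  omega

open Finset Classical in
lemma afz_class {α β : Type*} [Fintype α] (R : β → α → Prop) (P : Finset β) (D : ℝ) 
    (hD : ∀ f ∈ P, ∀ g ∈ P, f ≠ g → D ≤ ((univ.filter (fun a => ¬ (R f a ↔ R g a))).card : ℝ))
    (hP : P.Nonempty) :
    D * ((P.card : ℝ) - 1) ≤ 2 * ∑ a : α, 
      ((min (P.filter (fun f => ¬ R f a)).card (P.filter (fun f => R f a)).card : ℕ) : ℝ) := by
  have hp : (0 : ℝ) < P.card := by exact_mod_cast hP.card_pos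
  have h1 : ∀ a : α, ((P.filter (fun f => ¬ R f a)).card : ℝ) * (P.filter (fun f => R f a)).card
      ≤ P.card * ((min (P.filter (fun f => ¬ R f a)).card (P.filter (fun f => R f a)).card : ℕ) : ℝ) := by
    intro a
    have h := card_filter_add_card_filter_not (s := P) (fun f => R f a)
    rw [← h]
    norm_cast
    rcases le_total (P.filter (fun f => ¬ R f a)).card (P.filter (fun f => R f a)).card with h | h
    · rw [min_eq_left h]; nlinarith
    · rw [min_eq_right h]; nlinarith
  have h2 : ∀ a : α, 2 * (((P.filter (fun f => ¬ R f a)).card : ℝ) * (P.filter (fun f => R f a)).card)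
      = ∑ f ∈ P, ∑ g ∈ P, if ¬ (R f a ↔ R g a) then (1 : ℝ) else 0 := by
    intro a
    have e1 : (((P.filter (fun f => ¬ R f a)).card : ℝ) * (P.filter (fun f => R f a)).card)
      = ∑ f ∈ P, ∑ g ∈ P, if (¬ R f a ∧ R g a) then (1 : ℝ) else 0 := by
      rw [card_filter, card_filter]
      push_cast
      rw [sum_mul_sum]
      refine sum_congr rfl fun f _ => sum_congr rfl fun g _ => ?_
      by_cases h : R f a <;> by_cases h' : R g a <;> simp [h, h']
    have e2 : (((P.filter (fun f => ¬ R f a)).card : ℝ) * (P.filter (fun f => R f a)).card)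
      = ∑ f ∈ P, ∑ g ∈ P, if (R f a ∧ ¬ R g a) then (1 : ℝ) else 0 := by
      rw [e1, sum_comm]
      refine sum_congr rfl fun f _ => sum_congr rfl fun g _ => ?_
      by_cases h : R f a <;> by_cases h' : R g a <;> simp [h, h']
    rw [two_mul]
    nth_rw 1 [e1]
    rw [e2, ← sum_add_distrib]
    refine sum_congr rfl fun f _ => ?_
    rw [← sum_add_distrib]
    refine sum_congr rfl fun g _ => ?_
    by_cases h : R f a <;> by_cases h' : R g a <;> simp [h, h']
  have h3 : ∑ a : α, ∑ f ∈ P, ∑ g ∈ P, (if ¬ (R f a ↔ R g a) then (1 : ℝ) else 0)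
      = ∑ f ∈ P, ∑ g ∈ P, ((univ.filter (fun a => ¬ (R f a ↔ R g a))).card : ℝ) := by
    rw [sum_comm]
    refine sum_congr rfl fun f _ => ?_
    rw [sum_comm]
    refine sum_congr rfl fun g _ => ?_
    rw [sum_boole]
  have h4 : P.card * (D * ((P.card : ℝ) - 1)) ≤
      ∑ f ∈ P, ∑ g ∈ P, ((univ.filter (fun a => ¬ (R f a ↔ R g a))).card : ℝ) := by
    rw [← nsmul_eq_mul]
    apply card_nsmul_le_sum
    intro f hf
    rw [← add_sum_erase _ _ hf]
    have : ((P.erase f).card : ℝ) * D ≤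
        ∑ g ∈ P.erase f, ((univ.filter (fun a => ¬ (R f a ↔ R g a))).card : ℝ) := by
      rw [← nsmul_eq_mul]
      apply card_nsmul_le_sum
      intro g hg
      rw [mem_erase] at hg
      exact hD f hf g hg.2 hg.1.symm
    rw [card_erase_of_mem hf, Nat.cast_sub hP.card_pos] at this
    have h0 : (0:ℝ) ≤ ((univ.filter (fun a => ¬ (R f a ↔ R f a))).card : ℝ) := by positivity
    push_cast at this
    linarith
  have h5 : P.card * (D * ((P.card : ℝ) - 1)) ≤ P.card * (2 * ∑ a : α, 
      ((min (P.filter (fun f => ¬ R f a)).card (P.filter (fun f => R f a)).card : ℕ) : ℝ)) := by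
    refine h4.trans ?_
    rw [← h3, mul_left_comm, mul_sum, mul_sum]
    apply sum_le_sum
    intro a _
    rw [← h2 a]
    linarith [h1 a]
  exact le_of_mul_le_mul_left h5 hp

open Finset Classical in
lemma afz_avg {α ι : Type*} [Fintype α] [Fintype ι] (i : ι) (g : (ι → α) → ℝ) :
    ∑ σ : ι → α, ∑ a : α, g (Function.update σ i a) = Fintype.card α * ∑ σ, g σ := by
  rw [← Fintype.sum_prod_type' (f := fun (σ : ι → α) (a : α) => g (Function.update σ i a))]
  have h : ∑ x : (ι → α) × α, g (Function.update x.1 i x.2) = ∑ x : (ι → α) × α, g x.1 := by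
    apply sum_nbij' (fun x => (Function.update x.1 i x.2, x.1 i))
      (fun x => (Function.update x.1 i x.2, x.1 i)) <;> simp
  rw [h, Fintype.sum_prod_type]
  simp [mul_sum]

set_option maxHeartbeats 2000000 in
open Finset Classical in
lemma afz_packing_aux {α β ι : Type*} [Fintype α] [Nonempty α] [Fintype ι]
    (R : β → α → Prop) (F : Finset β) (d : ℕ) (D : ℝ) (hD0 : 0 ≤ D)
    (hVC : ∀ S : Finset α, (∀ T ⊆ S, ∃ f ∈ F, ∀ a ∈ S, (R f a ↔ a ∈ T)) → S.card ≤ d)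
    (hD : ∀ f ∈ F, ∀ g ∈ F, f ≠ g → D ≤ ((univ.filter (fun a => ¬ (R f a ↔ R g a))).card : ℝ)) :
    Fintype.card ι * D * ((F.card : ℝ) - (∑ k ∈ range (d + 1), (Fintype.card ι).choose k : ℕ)) ≤
      2 * Fintype.card α * (d * F.card) := by
  set C := ∑ k ∈ range (d + 1), (Fintype.card ι).choose k with hC
  set w : (ι → α) → Finset ι → ℕ := fun σ q => (F.filter (fun f => afzTrace R σ f = q)).card with hw
  -- upper bound
  have hup : ∀ σ : ι → α, (∑ i : ι, ∑ q ∈ univ.filter (fun q : Finset ι => i ∉ q),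
      ((min (w σ q) (w σ (insert i q)) : ℕ) : ℝ)) ≤ d * F.card := by
    intro σ
    have h1 := afz_weighted (w σ) d (by
      intro S hS
      apply afz_trace_vc R F d hVC σ S
      apply hS.mono_left
      intro q hq
      simp only [mem_filter, mem_univ, true_and, hw, card_pos] at hq
      obtain ⟨f, hf⟩ := hq
      rw [mem_filter] at hf
      exact mem_image.2 ⟨f, hf⟩)
    have h2 : ∑ q, w σ q = F.card := by
      rw [hw]
      exact (card_eq_sum_card_fiberwise (fun f _ => mem_univ _)).symm
    rw [h2] at h1
    exact_mod_cast h1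
  -- classes
  have hlow : ∀ i : ι, ∀ σ : ι → α, D * ((F.card : ℝ) - C) ≤ 
      2 * ∑ a : α, ∑ q ∈ univ.filter (fun q : Finset ι => i ∉ q),
      ((min (w (Function.update σ i a) q) (w (Function.update σ i a) (insert i q)) : ℕ) : ℝ) := by
    intro i σ
    set e : β → Finset ι := fun f => (afzTrace R σ f).erase i with he
    set P : Finset ι → Finset β := fun q => F.filter (fun f => e f = q) with hPdef
    have hcls : (F.image e).card ≤ C := by
      apply afz_sauer
      intro S hS
      apply afz_trace_vc R F d hVC σ S
      have hiS : i ∉ S := by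
        intro h
        obtain ⟨q, hq, hqS⟩ := hS (Subset.refl S)
        obtain ⟨f, hf, rfl⟩ := mem_image.1 hq
        rw [← hqS] at h
        simp [he] at h
      intro T hT
      obtain ⟨q, hq, hqT⟩ := hS hT
      obtain ⟨f, hf, rfl⟩ := mem_image.1 hq
      refine ⟨afzTrace R σ f, mem_image_of_mem _ hf, ?_⟩
      rw [← hqT]
      ext j
      simp only [he, mem_inter, mem_erase]
      constructor
      · rintro ⟨h1, h2⟩
        exact ⟨h1, fun h => hiS (h ▸ h1), h2⟩
      · tauto
    have hw1 : ∀ a, ∀ q, i ∉ q → w (Function.update σ i a) q =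
        ((P q).filter (fun f => ¬ R f a)).card := by
      intro a q hq
      simp only [hw, hPdef, filter_filter]
      congr 1
      apply filter_congr
      intro f _
      simp only [he, Finset.ext_iff, afzTrace, mem_filter, mem_univ, true_and, mem_erase]
      constructor
      · intro h
        refine ⟨fun j => ?_, ?_⟩
        · by_cases hj : j = i
          · subst hj; simp [hq]
          · have := h j
            rw [Function.update_of_ne hj] at this
            simp [hj, this]
        · have := h i
          simp [hq] at this
          exact this
      · rintro ⟨h1, h2⟩ j
        by_cases hj : j = i
        · subst hj; simp [hq, h2]
        · rw [Function.update_of_ne hj, ← h1 j]; simp [hj]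
    have hw2 : ∀ a, ∀ q, i ∉ q → w (Function.update σ i a) (insert i q) =
        ((P q).filter (fun f => R f a)).card := by
      intro a q hq
      simp only [hw, hPdef, filter_filter]
      congr 1
      apply filter_congr
      intro f _
      simp only [he, Finset.ext_iff, afzTrace, mem_filter, mem_univ, true_and, mem_erase, mem_insert]
      constructor
      · intro h
        refine ⟨fun j => ?_, ?_⟩
        · by_cases hj : j = i
          · subst hj; simp [hq]
          · have := h j
            rw [Function.update_of_ne hj] at this
            simp [hj, this]
        · have := h i
          simp at this
          exact this
      · rintro ⟨h1, h2⟩ j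
        by_cases hj : j = i
        · subst hj; simp [h2]
        · rw [Function.update_of_ne hj, ← h1 j]; simp [hj]
    rw [sum_comm, mul_sum]
    have hsum : (F.card : ℝ) = ∑ q ∈ F.image e, ((P q).card : ℝ) := by
      have := card_eq_sum_card_image e F
      exact_mod_cast this
    calc D * ((F.card : ℝ) - C) ≤ D * ((F.card : ℝ) - (F.image e).card) := by
          apply mul_le_mul_of_nonneg_left _ hD0
          have : ((F.image e).card : ℝ) ≤ C := by exact_mod_cast hcls
          linarith
      _ = ∑ q ∈ F.image e, D * (((P q).card : ℝ) - 1) := by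
          rw [← mul_sum, sum_sub_distrib, ← hsum, sum_const, nsmul_eq_mul, mul_one]
      _ ≤ ∑ q ∈ F.image e, 2 * ∑ a : α, ((min (w (Function.update σ i a) q) (w (Function.update σ i a) (insert i q)) : ℕ) : ℝ) := by
          apply sum_le_sum
          intro q hq
          obtain ⟨f, hf, rfl⟩ := mem_image.1 hq
          have hiq : i ∉ e f := notMem_erase _ _
          have := afz_class R (P (e f)) D (fun f' hf' g hg => hD f' (mem_filter.1 hf').1 g (mem_filter.1 hg).1)
            ⟨f, mem_filter.2 ⟨hf, rfl⟩⟩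
          refine this.trans (le_of_eq ?_)
          congr 1
          refine sum_congr rfl fun a _ => ?_
          rw [hw1 a _ hiq, hw2 a _ hiq]
      _ ≤ _ := by
          apply sum_le_sum_of_subset_of_nonneg
          · intro q hq
            obtain ⟨f, hf, rfl⟩ := mem_image.1 hq
            exact mem_filter.2 ⟨mem_univ _, notMem_erase _ _⟩
          · intro q _ _
            exact mul_nonneg zero_le_two (sum_nonneg fun a _ => Nat.cast_nonneg _)
  -- combine
  have hn : (0 : ℝ) < Fintype.card (ι → α) := by exact_mod_cast Fintype.card_pos
  have hcomb : ∀ i : ι, (Fintype.card (ι → α) : ℝ) * (D * ((F.card : ℝ) - C)) ≤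
      2 * (Fintype.card α * ∑ σ : ι → α, ∑ q ∈ univ.filter (fun q : Finset ι => i ∉ q),
      ((min (w σ q) (w σ (insert i q)) : ℕ) : ℝ)) := by
    intro i
    rw [← afz_avg i (fun σ => ∑ q ∈ univ.filter (fun q : Finset ι => i ∉ q),
      ((min (w σ q) (w σ (insert i q)) : ℕ) : ℝ)), mul_sum, ← nsmul_eq_mul]
    exact card_nsmul_le_sum _ _ _ (fun σ _ => hlow i σ)
  have h1 : (Fintype.card ι : ℝ) * ((Fintype.card (ι → α) : ℝ) * (D * ((F.card : ℝ) - C))) ≤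
      ∑ i : ι, 2 * (Fintype.card α * ∑ σ : ι → α, ∑ q ∈ univ.filter (fun q : Finset ι => i ∉ q),
      ((min (w σ q) (w σ (insert i q)) : ℕ) : ℝ)) := by
    rw [← nsmul_eq_mul]
    exact card_nsmul_le_sum _ _ _ (fun i _ => hcomb i)
  rw [← mul_sum, ← mul_sum, sum_comm] at h1
  have h2 : ∑ σ : ι → α, ∑ i : ι, ∑ q ∈ univ.filter (fun q : Finset ι => i ∉ q),
      ((min (w σ q) (w σ (insert i q)) : ℕ) : ℝ) ≤ Fintype.card (ι → α) * (d * F.card) := by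
    rw [← nsmul_eq_mul]
    exact sum_le_card_nsmul _ _ _ (fun σ _ => hup σ)
  have h3 : (Fintype.card (ι → α) : ℝ) * (Fintype.card ι * D * ((F.card : ℝ) - C)) ≤
      Fintype.card (ι → α) * (2 * Fintype.card α * (d * F.card)) := by
    have := mul_le_mul_of_nonneg_left h2 (show (0:ℝ) ≤ 2 * Fintype.card α by positivity)
    nlinarith
  exact le_of_mul_le_mul_left h3 hn

open Finset in
lemma afz_numeric (d s : ℕ) (hd : 1 ≤ d) (x : ℝ) (hx : 1 ≤ x) (hs : (s : ℝ) ≤ 5 * d * x) :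
    2 * ((∑ k ∈ range (d + 1), s.choose k : ℕ) : ℝ) ≤ (30 * x) ^ d := by
  have h1 : ((∑ k ∈ range (d + 1), s.choose k : ℕ) : ℝ) ≤
      ∑ k ∈ range (d + 1), (5 * x) ^ d * ((d : ℝ) ^ k / (k.factorial : ℝ)) := by
    push_cast
    apply sum_le_sum
    intro k hk
    have hkd : k ≤ d := by simp at hk; omega
    have hf : (0 : ℝ) < k.factorial := by exact_mod_cast k.factorial_pos
    calc (s.choose k : ℝ) ≤ (s : ℝ) ^ k / (k.factorial : ℝ) := Nat.choose_le_pow_div k s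
      _ ≤ (5 * d * x) ^ k / (k.factorial : ℝ) := by gcongr
      _ = (5 * x) ^ k * ((d : ℝ) ^ k / (k.factorial : ℝ)) := by
          rw [← mul_div_assoc, ← mul_pow]; ring_nf
      _ ≤ _ := by
          gcongr
          linarith
  rw [← mul_sum] at h1
  have h2 : ∑ k ∈ range (d + 1), ((d : ℝ) ^ k / (k.factorial : ℝ)) ≤ 3 ^ d := by
    refine (Real.sum_le_exp_of_nonneg (by positivity) _).trans ?_
    have : Real.exp (d : ℝ) = Real.exp 1 ^ d := by rw [← Real.exp_nat_mul]; simp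
    rw [this]
    gcongr
    linarith [Real.exp_one_lt_d9]
  have h3 : (2 : ℝ) ≤ 2 ^ d := by
    calc (2 : ℝ) = 2 ^ 1 := by norm_num
      _ ≤ 2 ^ d := pow_le_pow_right₀ (by norm_num) hd
  calc 2 * ((∑ k ∈ range (d + 1), s.choose k : ℕ) : ℝ) ≤ 2 ^ d * ((5 * x) ^ d * 3 ^ d) := by
        gcongr
        exact h1.trans (by gcongr)
    _ = (30 * x) ^ d := by rw [← mul_pow, ← mul_pow]; ring_nf

open Finset Classical in
lemma afz_packing {α β : Type*} [Fintype α] [Nonempty α]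
    (R : β → α → Prop) (F : Finset β) (d : ℕ) (hd : 1 ≤ d) (D : ℝ) (hD0 : 0 < D)
    (hDn : D ≤ Fintype.card α)
    (hVC : ∀ S : Finset α, (∀ T ⊆ S, ∃ f ∈ F, ∀ a ∈ S, (R f a ↔ a ∈ T)) → S.card ≤ d)
    (hD : ∀ f ∈ F, ∀ g ∈ F, f ≠ g → D ≤ ((univ.filter (fun a => ¬ (R f a ↔ R g a))).card : ℝ)) :
    (F.card : ℝ) ≤ (30 * (Fintype.card α / D)) ^ d := by
  set x : ℝ := Fintype.card α / D with hx
  have hx1 : 1 ≤ x := by rw [hx, le_div_iff₀ hD0]; linarith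
  set s := ⌈4 * d * x⌉₊ with hs
  have hs1 : 4 * d * x ≤ s := Nat.le_ceil _
  have hd' : (1 : ℝ) ≤ d := by exact_mod_cast hd
  have hs2 : (s : ℝ) ≤ 5 * d * x := by
    have := (Nat.ceil_lt_add_one (show 0 ≤ 4 * d * x by positivity)).le
    nlinarith
  have h := afz_packing_aux (ι := Fin s) R F d D hD0.le hVC hD
  rw [Fintype.card_fin] at h
  refine le_trans ?_ (afz_numeric d s hd x hx1 hs2)
  set C : ℝ := ((∑ k ∈ range (d + 1), s.choose k : ℕ) : ℝ) with hC
  have hC0 : 0 ≤ C := by positivity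
  have hn : (Fintype.card α : ℝ) = x * D := by rw [hx]; field_simp
  rw [hn] at h
  by_contra hcon
  push Not at hcon
  have h4 : 4 * d * x * D * ((F.card : ℝ) - C) ≤ 2 * (x * D) * (d * F.card) := by
    refine le_trans ?_ h
    have : 0 ≤ (F.card : ℝ) - C := by linarith
    gcongr
  have h5 : 0 < 2 * (d * x * D) := by positivity
  have : 2 * (d * x * D) * (2 * (F.card - C)) ≤ 2 * (d * x * D) * F.card := by linarith
  have := le_of_mul_le_mul_left this h5
  linarith

open Classical in
lemma afz_vc {G : Type*} [Group G] (A : Set G) (d : ℕ)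
    (hd : vcDim (leftFam A A) = (d : ℕ∞)) (S : Finset G) (hS : Shatters (leftFam A A) (S : Set G)) :
    S.card ≤ d := by
  have : (S.card : ℕ∞) ≤ vcDim (leftFam A A) := by
    unfold vcDim
    exact le_iSup₂ (f := fun (S : Finset G) (_ : Shatters (leftFam A A) ↑S) => (S.card : ℕ∞)) S hS
  rw [hd] at this
  exact_mod_cast this

lemma afz_st_subset {G : Type*} [Group G] (A : Set G) (hA : A.Finite) (hAne : A.Nonempty)
    (δ : ℝ) (hδ : δ < 2) : stL A δ ⊆ A * A⁻¹ := by
  intro x hx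
  by_contra hcon
  have hdisj : Disjoint (x • A) A := by
    rw [Set.disjoint_left]
    intro y hy hyA
    obtain ⟨a, ha, rfl⟩ := hy
    apply hcon
    refine ⟨x • a, hyA, a⁻¹, by simpa using ha, by simp⟩
  have hx' : ((((x • A) ∆ A).ncard : ℕ) : ℝ) ≤ δ * A.ncard := hx
  have h1 : ((x • A) ∆ A) = (x • A) ∪ A := by
    rw [hdisj.symmDiff_eq_sup]; rfl
  have h2 : (x • A).Finite := hA.smul_set
  rw [h1, Set.ncard_union_eq hdisj h2 hA, Set.ncard_smul_set] at hx'
  have hpos : (0 : ℝ) < A.ncard := by exact_mod_cast (Set.ncard_pos hA).2 hAne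
  push_cast at hx'
  nlinarith

lemma afz_st_one {G : Type*} [Group G] (A : Set G) (δ : ℝ) (hδ : 0 ≤ δ) : (1 : G) ∈ stL A δ := by
  change ((((1 : G) • A) ∆ A).ncard : ℝ) ≤ δ * A.ncard
  simp
  positivity

lemma afz_smul_symmDiff {G : Type*} [Group G] (x : G) (A B : Set G) :
    (x • (A ∆ B)).ncard = ((x • A) ∆ (x • B)).ncard := by
  rw [Set.smul_set_symmDiff]

lemma afz_st_inv {G : Type*} [Group G] (A : Set G) (δ : ℝ) : (stL A δ)⁻¹ = stL A δ := by
  have key : ∀ x, x ∈ stL A δ → x⁻¹ ∈ stL A δ := by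
    intro x hx
    change (((x⁻¹ • A) ∆ A).ncard : ℝ) ≤ δ * A.ncard
    have hx : (((x • A) ∆ A).ncard : ℝ) ≤ δ * A.ncard := hx
    rw [← Set.ncard_smul_set x, Set.smul_set_symmDiff, smul_inv_smul, symmDiff_comm]
    exact hx
  ext x
  rw [Set.mem_inv]
  exact ⟨fun h => by simpa using key _ h, key x⟩

lemma afz_st_mono {G : Type*} [Group G] (A : Set G) {δ δ' : ℝ} (h : δ ≤ δ') :
    stL A δ ⊆ stL A δ' := by
  intro x hx
  have hx : (((x • A) ∆ A).ncard : ℝ) ≤ δ * A.ncard := hx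
  change (((x • A) ∆ A).ncard : ℝ) ≤ δ' * A.ncard
  refine hx.trans ?_
  gcongr

lemma afz_st_pow {G : Type*} [Group G] (A : Set G) (hA : A.Finite) (δ : ℝ) (p : ℕ) :
    (stL A δ) ^ p ⊆ stL A (p * δ) := by
  induction p with
  | zero =>
    rw [pow_zero]
    intro x hx
    rw [Set.mem_one] at hx
    subst hx
    apply afz_st_one; simp
  | succ p ih =>
    rw [pow_succ]
    rintro z ⟨x, hx, y, hy, rfl⟩
    have hx : (((x • A) ∆ A).ncard : ℝ) ≤ (p * δ) * A.ncard := ih hx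
    have hy : (((y • A) ∆ A).ncard : ℝ) ≤ δ * A.ncard := hy
    change ((((x * y) • A) ∆ A).ncard : ℝ) ≤ ((p + 1 : ℕ) * δ) * A.ncard
    rw [← Set.ncard_smul_set x, Set.smul_set_symmDiff, smul_smul] at hy
    have hfin : (((x * y) • A) ∆ (x • A) ∪ (x • A) ∆ A).Finite :=
      (hA.smul_set.symmDiff hA.smul_set).union (hA.smul_set.symmDiff hA)
    have h1 : (((x * y) • A) ∆ A).ncard ≤ (((x * y) • A) ∆ (x • A)).ncard + ((x • A) ∆ A).ncard :=
      (Set.ncard_le_ncard (symmDiff_triangle _ (x • A) _) hfin).trans (Set.ncard_union_le _ _)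
    have h2 : ((((x * y) • A) ∆ A).ncard : ℝ) ≤
      (((x * y) • A) ∆ (x • A)).ncard + ((x • A) ∆ A).ncard := by exact_mod_cast h1
    push_cast
    linarith

open Classical in
lemma afz_cover {G : Type*} [Group G] (A : Set G)
    (hA : A.Finite) (hAne : A.Nonempty)
    (d : ℕ) (hd : vcDim (leftFam A A) = (d : ℕ∞)) (hd1 : 1 ≤ d) (δ : ℝ) (hδ0 : 0 < δ) (hδ1 : δ ≤ 1) :
    (A.ncard : ℝ) ≤ (30 * (((A * A).ncard : ℝ) / A.ncard) / δ) ^ d * (stL A δ).ncard := by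
  have hpos : (0 : ℝ) < A.ncard := by exact_mod_cast (Set.ncard_pos hA).2 hAne
  set Af := hA.toFinset with hAf
  set sep : Finset G → Prop := fun T => ∀ x ∈ T, ∀ y ∈ T, x ≠ y →
    δ * A.ncard < (((x • A) ∆ (y • A)).ncard : ℝ) with hsep
  obtain ⟨T, hT, hmax⟩ := Finset.exists_max_image (Af.powerset.filter sep) Finset.card
    ⟨∅, by simp [hsep]⟩
  rw [Finset.mem_filter, Finset.mem_powerset] at hT
  obtain ⟨hTA, hTsep⟩ := hT
  have hTA' : ∀ x ∈ T, x ∈ A := fun x hx => by simpa [hAf] using hTA hx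
  have hAA : (A * A).Finite := hA.mul hA
  have : Fintype ↥(A * A) := hAA.fintype
  have hne : Nonempty ↥(A * A) := (hAne.mul hAne).to_subtype
  have hcardAA : Fintype.card ↥(A * A) = (A * A).ncard := by
    rw [← Nat.card_eq_fintype_card, Nat.card_coe_set_eq]
  have hsubAA : ∀ x ∈ T, x • A ⊆ A * A := by
    rintro x hx _ ⟨a, ha, rfl⟩
    exact ⟨x, hTA' x hx, a, ha, rfl⟩
  have hAAA : A.ncard ≤ (A * A).ncard := by
    obtain ⟨a, ha⟩ := hAne
    rw [← Set.ncard_smul_set a A]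
    apply Set.ncard_le_ncard _ hAA
    rintro _ ⟨b, hb, rfl⟩
    exact ⟨a, ha, b, hb, rfl⟩
  have hpack := afz_packing (α := ↥(A * A)) (fun (x : G) a => (a : G) ∈ x • A) T d hd1
    (δ * A.ncard) (by positivity) (by
      rw [hcardAA]
      have : (A.ncard : ℝ) ≤ (A * A).ncard := by exact_mod_cast hAAA
      nlinarith)
    (by
      intro S hS
      rw [← Finset.card_map (Function.Embedding.subtype _)]
      apply afz_vc A d hd
      intro U hU
      obtain ⟨f, hf, h⟩ := hS (S.filter (fun a => (a : G) ∈ U)) (Finset.filter_subset _ _)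
      refine ⟨f • A, ⟨f, hTA' f hf, rfl⟩, ?_⟩
      ext y
      constructor
      · rintro ⟨hy, hyf⟩
        simp only [Finset.coe_map, Set.mem_image, Finset.mem_coe] at hy
        obtain ⟨a, ha, rfl⟩ := hy
        have := (h a ha).1 hyf
        exact (Finset.mem_filter.1 this).2
      · intro hy
        have hy' := hU hy
        refine ⟨hy', ?_⟩
        simp only [Finset.coe_map, Set.mem_image, Finset.mem_coe] at hy'
        obtain ⟨a, ha, rfl⟩ := hy'
        exact (h a ha).2 (Finset.mem_filter.2 ⟨ha, hy⟩))
    (by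
      intro x hx y hy hxy
      refine (hTsep x hx y hy hxy).le.trans ?_
      norm_cast
      rw [← Finset.card_map (Function.Embedding.subtype _), ← Set.ncard_coe_finset]
      apply Set.ncard_le_ncard _ (Finset.finite_toSet _)
      intro z hz
      have hzA : z ∈ A * A := by
        rcases hz with hz | hz
        · exact hsubAA x hx hz.1
        · exact hsubAA y hy hz.1
      simp only [Finset.coe_map, Set.mem_image, Finset.mem_coe]
      refine ⟨⟨z, hzA⟩, ?_, rfl⟩
      simp only [Finset.mem_filter, Finset.mem_univ, true_and]
      rcases hz with hz | hz
      · exact fun h => hz.2 (h.1 hz.1)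
      · exact fun h => hz.2 (h.2 hz.1))
  have hSfin : (stL A δ).Finite :=
    (hA.mul hA.inv).subset (afz_st_subset A hA hAne δ (by linarith))
  have hcov : A ⊆ (T : Set G) * stL A δ := by
    intro y hy
    have : ∃ x ∈ T, (((x • A) ∆ (y • A)).ncard : ℝ) ≤ δ * A.ncard := by
      by_contra hcon
      push Not at hcon
      have hyT : y ∉ T := by
        intro h
        have := hcon y h
        simp at this
        have : 0 < δ * A.ncard := by positivity
        linarith
      have := hmax (insert y T) (by
        rw [Finset.mem_filter, Finset.mem_powerset]
        refine ⟨?_, ?_⟩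
        · intro z hz
          rw [Finset.mem_insert] at hz
          rcases hz with rfl | hz
          · simpa [hAf] using hy
          · exact hTA hz
        · intro a ha b hb hab
          rw [Finset.mem_insert] at ha hb
          rcases ha with rfl | ha <;> rcases hb with rfl | hb
          · exact absurd rfl hab
          · rw [symmDiff_comm]; exact hcon b hb
          · exact hcon a ha
          · exact hTsep a ha b hb hab)
      rw [Finset.card_insert_of_notMem hyT] at this
      omega
    obtain ⟨x, hx, h⟩ := this
    refine ⟨x, hx, x⁻¹ * y, ?_, by simp⟩
    change ((((x⁻¹ * y) • A) ∆ A).ncard : ℝ) ≤ δ * A.ncard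
    rw [← Set.ncard_smul_set x, Set.smul_set_symmDiff, smul_smul, mul_inv_cancel_left, symmDiff_comm]
    exact h
  have h1 : A.ncard ≤ T.card * (stL A δ).ncard := by
    refine (Set.ncard_le_ncard hcov (T.finite_toSet.mul hSfin)).trans ?_
    rw [← Set.ncard_coe_finset T]
    simp only [← Nat.card_coe_set_eq]
    exact Set.natCard_mul_le
  have h2 : (A.ncard : ℝ) ≤ T.card * (stL A δ).ncard := by exact_mod_cast h1
  rw [hcardAA] at hpack
  refine h2.trans ?_
  have e : 30 * (((A * A).ncard : ℝ) / A.ncard) / δ = 30 * ((A * A).ncard / (δ * A.ncard)) := by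
    field_simp
  rw [e]
  gcongr

theorem afz_trick {G : Type*} [Group G] (A : Set G)
    (hA : A.Finite) (hAne : A.Nonempty)
    (d : ℕ) (hd : vcDim (leftFam A A) = (d : ℕ∞)) (hd1 : 1 ≤ d)
    (n u : ℕ) (hu : 2 ≤ u) (hun : u ≤ n)
    (ε : ℝ) (hε0 : 0 < ε) (hε1 : ε < 1) :
    ∃ B : Set G, B.Finite ∧ B⁻¹ = B ∧ (1 : G) ∈ B ∧
      ((B ^ u).ncard : ℝ) ≤ (u : ℝ) ^ (d * (d + 1)) * B.ncard ∧
      B ^ n ⊆ stL A ε ∧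
      (A.ncard : ℝ) ≤ (((A * A⁻¹).ncard : ℝ) / A.ncard) ^ ((d : ℝ)⁻¹) *
        (30 * (((A * A).ncard : ℝ) / A.ncard) * n / ε) ^ (d + 1) * B.ncard := by
  have hpos : (0 : ℝ) < A.ncard := by exact_mod_cast (Set.ncard_pos hA).2 hAne
  have hu2 : (2 : ℝ) ≤ u := by exact_mod_cast hu
  have hu0 : (0 : ℝ) < u := by linarith
  have hunR : (u : ℝ) ≤ n := by exact_mod_cast hun
  have hn0 : (0 : ℝ) < n := by linarith
  set δ : ℕ → ℝ := fun j => (u * ε / n) / (u : ℝ) ^ j with hδ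
  have hδ0 : ∀ j, 0 < δ j := fun j => by simp only [hδ]; positivity
  have hδ1 : ∀ j, δ j ≤ ε := by
    intro j
    simp only [hδ]
    have h1 : (1 : ℝ) ≤ (u : ℝ) ^ j := one_le_pow₀ (by linarith)
    calc (u * ε / n) / (u : ℝ) ^ j ≤ u * ε / n := div_le_self (by positivity) h1
      _ ≤ ε := by rw [div_le_iff₀ hn0]; nlinarith
  have hδs : ∀ j, u * δ (j + 1) = δ j := by
    intro j; simp only [hδ, pow_succ]; field_simp
  have hfin : ∀ j, (stL A (δ j)).Finite := fun j =>
    (hA.mul hA.inv).subset (afz_st_subset A hA hAne _ (by linarith [hδ1 j]))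
  set t : ℕ → ℝ := fun j => ((stL A (δ j)).ncard : ℝ) with ht
  have ht1 : ∀ j, 1 ≤ t j := by
    intro j
    have : 0 < (stL A (δ j)).ncard := (Set.ncard_pos (hfin j)).2 ⟨1, afz_st_one A _ (hδ0 j).le⟩
    simp only [ht]; exact_mod_cast this
  set q : ℝ := (u : ℝ) ^ (d * (d + 1)) with hq
  have hq0 : 0 < q := by positivity
  have hchain : ∀ J, (∀ j < J, ¬ (t j ≤ q * t (j + 1))) → q ^ J * t J ≤ t 0 := by
    intro J
    induction J with
    | zero => intro _; simp
    | succ J ih =>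
      intro h
      have h1 := ih (fun j hj => h j (by omega))
      have h2 := h J (by omega)
      push Not at h2
      refine le_trans ?_ h1
      rw [pow_succ, mul_assoc]
      gcongr
  have hex : ∃ j, t j ≤ q * t (j + 1) := by
    by_contra hcon
    push Not at hcon
    have hq2 : 1 < q := by
      apply one_lt_pow₀ (by linarith)
      have : 0 < d * (d + 1) := by positivity
      omega
    obtain ⟨J, hJ⟩ := pow_unbounded_of_one_lt (t 0) hq2
    have h1 := hchain J (fun j _ => not_le.2 (hcon j))
    have h2 := ht1 J
    have h3 : 0 < q ^ J := by positivity
    nlinarith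
  classical
  set J := Nat.find hex with hJ
  have hJ1 : t J ≤ q * t (J + 1) := Nat.find_spec hex
  have hJ2 : q ^ J * t J ≤ t 0 := hchain J (fun j hj => Nat.find_min hex hj)
  refine ⟨stL A (δ (J + 1)), hfin _, afz_st_inv A _, afz_st_one A _ (hδ0 _).le, ?_, ?_, ?_⟩
  · refine le_trans ?_ hJ1
    simp only [ht]
    have := afz_st_pow A hA (δ (J + 1)) u
    rw [hδs] at this
    exact_mod_cast Set.ncard_le_ncard this (hfin J)
  · refine (afz_st_pow A hA (δ (J + 1)) n).trans (afz_st_mono A ?_)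
    have h1 : (1 : ℝ) ≤ (u : ℝ) ^ J := one_le_pow₀ (by linarith)
    have : n * δ (J + 1) = ε / (u : ℝ) ^ J := by
      simp only [hδ, pow_succ]; field_simp
    rw [this]
    exact div_le_self hε0.le h1
  · set k : ℝ := ((A * A).ncard : ℝ) / A.ncard with hk
    set m : ℝ := ((A * A⁻¹).ncard : ℝ) / A.ncard with hm
    set K : ℝ := 30 * k * n / ε with hK
    have hAA0 : (0 : ℝ) < (A * A).ncard := by
      exact_mod_cast (Set.ncard_pos (hA.mul hA)).2 (hAne.mul hAne)
    have hk0 : 0 < k := by positivity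
    have hm0 : 0 ≤ m := by positivity
    have hK0 : 0 < K := by positivity
    have hKj : ∀ j, 30 * k / δ j = K / u * (u : ℝ) ^ j := by
      intro j; simp only [hδ, hK]; field_simp
    have hcov : ∀ j, (A.ncard : ℝ) ≤ (K / u * (u : ℝ) ^ j) ^ d * t j := by
      intro j
      have := afz_cover A hA hAne d hd hd1 (δ j) (hδ0 j) (by linarith [hδ1 j])
      rwa [← hk, hKj] at this
    have ht0 : t 0 ≤ m * A.ncard := by
      have h1 : (stL A (δ 0)).ncard ≤ (A * A⁻¹).ncard :=
        Set.ncard_le_ncard (afz_st_subset A hA hAne _ (by linarith [hδ1 0])) (hA.mul hA.inv)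
      have : m * A.ncard = (A * A⁻¹).ncard := by rw [hm]; field_simp
      rw [this]
      simp only [ht]
      exact_mod_cast h1
    -- main inequality
    have hqJ : q ^ J = ((u : ℝ) ^ (d * J)) ^ d * ((u : ℝ) ^ J) ^ d := by
      rw [hq]; ring
    have hmain : ((u : ℝ) ^ (d * J)) ^ d ≤ m * (K / u) ^ d := by
      have h1 : q ^ J * A.ncard ≤ m * (K / u * (u : ℝ) ^ J) ^ d * A.ncard := by
        calc q ^ J * A.ncard ≤ q ^ J * ((K / u * (u : ℝ) ^ J) ^ d * t J) := by
              gcongr; exact hcov J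
          _ = (K / u * (u : ℝ) ^ J) ^ d * (q ^ J * t J) := by ring
          _ ≤ (K / u * (u : ℝ) ^ J) ^ d * (m * A.ncard) := by
              exact mul_le_mul_of_nonneg_left (hJ2.trans ht0) (by positivity)
          _ = _ := by ring
      have h2 := le_of_mul_le_mul_right h1 hpos
      rw [hqJ, mul_pow, ← mul_assoc] at h2
      exact le_of_mul_le_mul_right h2 (by positivity)
    have hroot : (u : ℝ) ^ (d * J) ≤ m ^ ((d : ℝ)⁻¹) * K := by
      have hd0 : d ≠ 0 := by omega
      have h1 : m = (m ^ ((d : ℝ)⁻¹)) ^ d := (Real.rpow_inv_natCast_pow hm0 hd0).symm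
      rw [h1, ← mul_pow] at hmain
      have hr : 0 ≤ m ^ ((d : ℝ)⁻¹) := Real.rpow_nonneg hm0 _
      have h2 := le_of_pow_le_pow_left₀ hd0 (by positivity) hmain
      refine h2.trans ?_
      gcongr
      exact div_le_self hK0.le (by linarith)
    have hfinal := hcov (J + 1)
    have e : (K / u * (u : ℝ) ^ (J + 1)) ^ d = K ^ d * (u : ℝ) ^ (d * J) := by
      have : K / u * (u : ℝ) ^ (J + 1) = K * (u : ℝ) ^ J := by
        rw [pow_succ]; field_simp
      rw [this, mul_pow, ← pow_mul, mul_comm J d]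
    rw [e] at hfinal
    refine hfinal.trans ?_
    simp only [ht]
    have : m ^ ((d : ℝ)⁻¹) * K ^ (d + 1) = K ^ d * (m ^ ((d : ℝ)⁻¹) * K) := by ring
    rw [this]
    gcongr
end

section
/- Let G be a group and A ⊆ G a nonempty finite set. Let d = VC^ℓ_{A⁻¹}(A), k = |A⁻¹A|/|A|, and m = |AA⁻¹|/|A|, and assume d ≥ 1. Then for any integers n ≥ u ≥ 2 and any ε ∈ (0,1), there is a symmetric set B ⊆ G such that |B^u| ≤ u^{d(d+1)}|B|, B^n ⊆ St^ℓ_ε(A), and |A| ≤ m^{1/d}(30kn/ε)^{d+1}|B|. -/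
open scoped Pointwise symmDiff

/-- weighted one-inclusion graph edge bound -/
theorem edge_bound {ι : Type*} [DecidableEq ι] (T : Finset ι) : ∀ (D : ℕ) (w : Finset ι → ℝ) (_ : ∀ q, 0 ≤ w q)
    (_ : ∀ S ⊆ T, (∀ U ⊆ S, ∃ q ⊆ T, w q ≠ 0 ∧ S ∩ q = U) → S.card < D),
    (∑ i ∈ T, ∑ q ∈ (T.erase i).powerset, min (w q) (w (insert i q))) + ∑ q ∈ T.powerset, w q
      ≤ D * ∑ q ∈ T.powerset, w q := by
  induction T using Finset.induction_on with
  | empty =>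
    intro D w hw h
    simp only [Finset.sum_empty, zero_add, Finset.powerset_empty, Finset.sum_singleton]
    by_cases h0 : w ∅ = 0
    · simp [h0]
    · have := h ∅ (by simp) (by
        intro U hU
        exact ⟨∅, by simp, h0, by simpa using (Finset.subset_empty.mp hU).symm⟩)
      have h1 : (1:ℝ) ≤ D := by exact_mod_cast (by simpa using this : 0 < D)
      nlinarith [hw ∅]
  | insert x T hx ih =>
    intro D w hw h
    set w1 : Finset ι → ℝ := fun q => max (w q) (w (insert x q)) with hw1
    set w2 : Finset ι → ℝ := fun q => min (w q) (w (insert x q)) with hw2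
    have hw1n : ∀ q, 0 ≤ w1 q := fun q => le_max_of_le_left (hw q)
    have hw2n : ∀ q, 0 ≤ w2 q := fun q => le_min (hw q) (hw _)
    have e1 : ∑ q ∈ (insert x T).powerset, w q
        = ∑ q ∈ T.powerset, w1 q + ∑ q ∈ T.powerset, w2 q := by
      rw [Finset.sum_powerset_insert hx, ← Finset.sum_add_distrib, ← Finset.sum_add_distrib]
      exact Finset.sum_congr rfl fun q _ => (max_add_min _ _).symm
    have e2 : (∑ i ∈ insert x T, ∑ q ∈ ((insert x T).erase i).powerset,
          min (w q) (w (insert i q)))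
        ≤ ∑ q ∈ T.powerset, w2 q
          + (∑ i ∈ T, ∑ q ∈ (T.erase i).powerset, min (w1 q) (w1 (insert i q)))
          + (∑ i ∈ T, ∑ q ∈ (T.erase i).powerset, min (w2 q) (w2 (insert i q))) := by
      rw [Finset.sum_insert hx, Finset.erase_insert hx, add_assoc, ← Finset.sum_add_distrib]
      refine add_le_add le_rfl (Finset.sum_le_sum fun i hi => ?_)
      have hix : x ≠ i := fun e => hx (e ▸ hi)
      have hx' : x ∉ T.erase i := fun e => hx (Finset.mem_of_mem_erase e)
      rw [Finset.erase_insert_of_ne hix, Finset.sum_powerset_insert hx', ← Finset.sum_add_distrib,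
        ← Finset.sum_add_distrib]
      refine Finset.sum_le_sum fun q _ => ?_
      rw [Finset.insert_comm i x q]
      simp only [hw1, hw2]
      generalize w q = a
      generalize w (insert x q) = b
      generalize w (insert i q) = c
      generalize w (insert x (insert i q)) = e
      grind
    have h1 : ∀ S ⊆ T, (∀ U ⊆ S, ∃ q ⊆ T, w1 q ≠ 0 ∧ S ∩ q = U) → S.card < D := by
      intro S hS hsh
      refine h S (hS.trans (Finset.subset_insert _ _)) fun U hU => ?_
      obtain ⟨q, hq, hne, hU'⟩ := hsh U hU
      by_cases h0 : w q = 0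
      · refine ⟨insert x q, Finset.insert_subset_insert _ hq, ?_, ?_⟩
        · intro h2
          exact hne (by simp [hw1, h0, h2])
        · rw [Finset.inter_insert_of_notMem (fun e => hx (hS e)), hU']
      · exact ⟨q, hq.trans (Finset.subset_insert _ _), h0, hU'⟩
    have i1 := ih D w1 hw1n h1
    have h2 : ∀ S ⊆ T, (∀ U ⊆ S, ∃ q ⊆ T, w2 q ≠ 0 ∧ S ∩ q = U) → S.card + 1 < D := by
      intro S hS hsh
      have hxS : x ∉ S := fun e => hx (hS e)
      rw [← Finset.card_insert_of_notMem hxS]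
      refine h _ (Finset.insert_subset_insert _ hS) fun U hU => ?_
      obtain ⟨q, hq, hne, hU'⟩ := hsh (U.erase x) (by
        intro y hy
        have := hU (Finset.mem_of_mem_erase hy)
        have := Finset.ne_of_mem_erase hy
        simp_all)
      have hxq : x ∉ q := fun e => hx (hq e)
      have a1 : w q ≠ 0 := by
        intro h0
        exact hne (by simp [hw2, h0, hw])
      have a2 : w (insert x q) ≠ 0 := by
        intro h0
        exact hne (by simp [hw2, h0, hw])
      by_cases hxU : x ∈ U
      · refine ⟨insert x q, Finset.insert_subset_insert _ hq, a2, ?_⟩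
        rw [← Finset.insert_inter_distrib, hU', Finset.insert_erase hxU]
      · refine ⟨q, hq.trans (Finset.subset_insert _ _), a1, ?_⟩
        rw [Finset.insert_inter_of_notMem hxq, hU', Finset.erase_eq_of_notMem hxU]
    rw [e1]
    rcases D with _ | D
    · have z2 := ih 0 w2 hw2n (fun S hS hsh => by have := h2 S hS hsh; omega)
      have p1 : 0 ≤ ∑ q ∈ T.powerset, w2 q := Finset.sum_nonneg fun q _ => hw2n q
      have p2 : 0 ≤ (∑ i ∈ T, ∑ q ∈ (T.erase i).powerset, min (w2 q) (w2 (insert i q))) :=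
        Finset.sum_nonneg fun i _ => Finset.sum_nonneg fun q _ => le_min (hw2n _) (hw2n _)
      push_cast at *
      nlinarith
    · have i2 := ih D w2 hw2n (fun S hS hsh => by have := h2 S hS hsh; omega)
      push_cast at *
      nlinarith

open Classical in
theorem class_bound {ι α : Type*} [Fintype α] (R : ι → α → Prop) (C : Finset ι) (δ : ℝ)
    (hδ : 0 ≤ δ)
    (hsep : ∀ j ∈ C, ∀ j' ∈ C, j ≠ j' →
      δ ≤ ((Finset.univ.filter fun x => ¬ (R j x ↔ R j' x)).card : ℝ)) :
    ((C.card : ℝ) - 1) * δ / 2 ≤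
      ∑ x, min ((C.filter fun j => ¬ R j x).card : ℝ) ((C.filter fun j => R j x).card : ℝ) := by
  rcases C.eq_empty_or_nonempty with rfl | hne
  · simp; linarith
  have hc : (0:ℝ) < C.card := by exact_mod_cast hne.card_pos
  have key : (C.card : ℝ) * (C.card - 1) * δ ≤ 2 * ∑ x, ((C.filter fun j => ¬ R j x).card : ℝ) *
      ((C.filter fun j => R j x).card : ℝ) := by
    have e : ∀ x, 2 * (((C.filter fun j => ¬ R j x).card : ℝ) *
      ((C.filter fun j => R j x).card : ℝ)) = ∑ j ∈ C, ∑ j' ∈ C,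
        if ¬ (R j x ↔ R j' x) then (1:ℝ) else 0 := by
      intro x
      have : ∀ j ∈ C, ∀ j' ∈ C, (if ¬ (R j x ↔ R j' x) then (1:ℝ) else 0)
        = (if ¬ R j x then 1 else 0) * (if R j' x then 1 else 0)
          + (if R j x then 1 else 0) * (if ¬ R j' x then 1 else 0) := by
        intro j _ j' _
        by_cases h1 : R j x <;> by_cases h2 : R j' x <;> simp [h1, h2]
      rw [Finset.sum_congr rfl fun j hj => Finset.sum_congr rfl (this j hj)]
      simp only [Finset.sum_add_distrib, ← Finset.mul_sum, ← Finset.sum_mul, Finset.sum_boole]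
      ring
    rw [Finset.mul_sum, Finset.sum_congr rfl fun x _ => e x, Finset.sum_comm,
      Finset.sum_congr rfl fun j _ => Finset.sum_comm]
    have : ∀ j ∈ C, ((C.card : ℝ) - 1) * δ ≤ ∑ j' ∈ C, ∑ x,
        if ¬ (R j x ↔ R j' x) then (1:ℝ) else 0 := by
      intro j hj
      rw [← Finset.add_sum_erase _ _ hj]
      have : ∑ j' ∈ C.erase j, δ ≤ ∑ j' ∈ C.erase j, ∑ x,
          if ¬ (R j x ↔ R j' x) then (1:ℝ) else 0 := by
        refine Finset.sum_le_sum fun j' hj' => ?_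
        rw [Finset.sum_boole]
        exact hsep j hj j' (Finset.mem_of_mem_erase hj') (Finset.ne_of_mem_erase hj').symm
      rw [Finset.sum_const, Finset.card_erase_of_mem hj, nsmul_eq_mul,
        Nat.cast_sub hne.card_pos] at this
      simpa using this
    have h3 := Finset.sum_le_sum this
    rw [Finset.sum_const, nsmul_eq_mul] at h3
    linarith
  have h4 : ∑ x, ((C.filter fun j => ¬ R j x).card : ℝ) * ((C.filter fun j => R j x).card : ℝ)
      ≤ C.card * ∑ x, min ((C.filter fun j => ¬ R j x).card : ℝ)
        ((C.filter fun j => R j x).card : ℝ) := by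
    rw [Finset.mul_sum]
    refine Finset.sum_le_sum fun x _ => ?_
    have l1 : ((C.filter fun j => ¬ R j x).card : ℝ) ≤ C.card := by
      exact_mod_cast Finset.card_filter_le _ _
    have l2 : ((C.filter fun j => R j x).card : ℝ) ≤ C.card := by
      exact_mod_cast Finset.card_filter_le _ _
    rcases min_cases ((C.filter fun j => ¬ R j x).card : ℝ) ((C.filter fun j => R j x).card : ℝ)
      with ⟨h, _⟩ | ⟨h, _⟩ <;> rw [h]
    · rw [mul_comm]; gcongr
    · gcongr
  have := mul_le_mul_of_nonneg_left h4 (zero_le_two (α := ℝ))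
  refine le_of_mul_le_mul_left ?_ hc
  linarith

theorem choose_sum_le (d s : ℕ) (hd : 1 ≤ d) (hs : d ≤ s) :
    (∑ k ∈ Finset.Iic d, (s.choose k : ℝ)) ≤ (Real.exp 1 * s / d) ^ d := by
  have hd0 : (0:ℝ) < d := by exact_mod_cast hd
  have hs0 : (0:ℝ) < s := by exact_mod_cast (by omega : 0 < s)
  have hds : (d:ℝ) / s ≤ 1 := by rw [div_le_one hs0]; exact_mod_cast hs
  have h1 : (∑ k ∈ Finset.Iic d, (s.choose k : ℝ)) * ((d:ℝ)/s)^d ≤ (d/s + 1 : ℝ)^s := by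
    rw [add_pow, Finset.sum_mul]
    have : Finset.Iic d ⊆ Finset.range (s+1) := by
      intro k; simp; omega
    refine le_trans ?_ (Finset.sum_le_sum_of_subset_of_nonneg this fun _ _ _ => by positivity)
    refine Finset.sum_le_sum fun k hk => ?_
    rw [one_pow, mul_one, mul_comm]
    gcongr ?_ * _
    exact pow_le_pow_of_le_one (by positivity) hds (by simpa using hk)
  have h2 : (d/s + 1 : ℝ)^s ≤ Real.exp 1 ^ d := by
    calc (d/s + 1 : ℝ)^s ≤ (Real.exp (d/s))^s := by
          gcongr; exact Real.add_one_le_exp _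
      _ = Real.exp 1 ^ d := by
          rw [← Real.exp_nat_mul, ← Real.exp_nat_mul]; congr 1; field_simp
  have h3 := h1.trans h2
  rw [← le_div_iff₀ (by positivity), ← div_pow] at h3
  refine h3.trans (le_of_eq ?_)
  congr 1; field_simp

/-- trace of the `j`-th set on the sequence `a` -/
noncomputable def trc {ι α : Type*} (R : ι → α → Prop) {s : ℕ} (a : Fin s → α) (j : ι) :
    Finset (Fin s) := by
  classical exact Finset.univ.filter fun i => R j (a i)

theorem mem_trc {ι α : Type*} (R : ι → α → Prop) {s : ℕ} (a : Fin s → α) (j : ι) (i : Fin s) :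
    i ∈ trc R a j ↔ R j (a i) := by
  simp [trc]

open Classical in
theorem trc_shatters {ι α : Type*} (R : ι → α → Prop) (F : Finset ι) (d : ℕ)
    (hvc : ∀ S : Finset α, (∀ U ⊆ S, ∃ j ∈ F, ∀ x ∈ S, R j x ↔ x ∈ U) → S.card ≤ d)
    {s : ℕ} (a : Fin s → α) (S : Finset (Fin s))
    (hS : ∀ U ⊆ S, ∃ j ∈ F, S ∩ trc R a j = U) : S.card ≤ d := by
  have hinj : Set.InjOn a S := by
    intro i hi i' hi' e
    by_contra hne
    obtain ⟨j, _, hj⟩ := hS {i} (by simpa using hi)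
    have h1 : i ∈ S ∩ trc R a j := by rw [hj]; simp
    have h2 : i' ∉ S ∩ trc R a j := by rw [hj]; simp; exact fun h => hne h.symm
    simp only [Finset.mem_inter, mem_trc] at h1 h2
    rw [← e] at h2
    exact h2 ⟨hi', h1.2⟩
  rw [← Finset.card_image_of_injOn hinj]
  refine hvc _ fun U hU => ?_
  obtain ⟨j, hjF, hj⟩ := hS (S.filter fun i => a i ∈ U) (Finset.filter_subset _ _)
  refine ⟨j, hjF, ?_⟩
  intro x hx
  obtain ⟨i, hi, rfl⟩ := Finset.mem_image.mp hx
  have : i ∈ S ∩ trc R a j ↔ i ∈ S.filter fun i => a i ∈ U := by rw [hj]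
  simpa [mem_trc, show i ∈ S from hi] using this

open Classical in
theorem card_trc_le {ι α : Type*} (R : ι → α → Prop) (F : Finset ι) (d : ℕ)
    (hvc : ∀ S : Finset α, (∀ U ⊆ S, ∃ j ∈ F, ∀ x ∈ S, R j x ↔ x ∈ U) → S.card ≤ d)
    {s : ℕ} (a : Fin s → α) :
    (F.image (trc R a)).card ≤ ∑ k ∈ Finset.Iic d, s.choose k := by
  have hv : (F.image (trc R a)).vcDim ≤ d := by
    unfold Finset.vcDim
    refine Finset.sup_le fun S hS => ?_
    rw [Finset.mem_shatterer] at hS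
    refine trc_shatters R F d hvc a S fun U hU => ?_
    obtain ⟨q, hq, e⟩ := hS hU
    obtain ⟨j, hj, rfl⟩ := Finset.mem_image.mp hq
    exact ⟨j, hj, e⟩
  refine (Finset.card_le_card_shatterer _).trans (Finset.card_shatterer_le_sum_vcDim.trans ?_)
  rw [Fintype.card_fin]
  exact Finset.sum_le_sum_of_subset (Finset.Iic_subset_Iic.mpr hv)

open Classical in
/-- weight of the edges in direction `i` -/
noncomputable def dirW {ι α : Type*} (R : ι → α → Prop) (F : Finset ι) {s : ℕ}
    (a : Fin s → α) (i : Fin s) : ℝ :=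
  ∑ q ∈ ((Finset.univ : Finset (Fin s)).erase i).powerset,
    min ((F.filter fun j => trc R a j = q).card : ℝ)
      ((F.filter fun j => trc R a j = insert i q).card : ℝ)

theorem sum_dirW_le {ι α : Type*} (R : ι → α → Prop) (F : Finset ι) (d : ℕ)
    (hvc : ∀ S : Finset α, (∀ U ⊆ S, ∃ j ∈ F, ∀ x ∈ S, R j x ↔ x ∈ U) → S.card ≤ d)
    {s : ℕ} (a : Fin s → α) : ∑ i, dirW R F a i ≤ d * F.card := by
  classical
  have h := edge_bound (Finset.univ : Finset (Fin s)) (d+1)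
    (fun q => ((F.filter fun j => trc R a j = q).card : ℝ)) (fun q => by positivity) (by
      intro S _ hS
      refine Nat.lt_succ_of_le (trc_shatters R F d hvc a S fun U hU => ?_)
      obtain ⟨q, _, hne, e⟩ := hS U hU
      have : (F.filter fun j => trc R a j = q).Nonempty := by
        rw [← Finset.card_ne_zero]; exact_mod_cast hne
      obtain ⟨j, hj⟩ := this
      rw [Finset.mem_filter] at hj
      exact ⟨j, hj.1, by rw [hj.2, e]⟩)
  have h2 : ∑ q ∈ (Finset.univ : Finset (Fin s)).powerset,
      ((F.filter fun j => trc R a j = q).card : ℝ) = F.card := by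
    rw [← Nat.cast_sum, ← Finset.card_eq_sum_card_fiberwise]
    intro x _; simp
  rw [h2] at h
  push_cast at h
  unfold dirW
  linarith

open Classical in
theorem dir_lower {ι α : Type*} [Fintype α] (R : ι → α → Prop) (F : Finset ι) (δ P : ℝ)
    (hδ : 0 ≤ δ)
    (hsep : ∀ j ∈ F, ∀ j' ∈ F, j ≠ j' →
      δ ≤ ((Finset.univ.filter fun x => ¬ (R j x ↔ R j' x)).card : ℝ))
    {s : ℕ} (a : Fin s → α) (i : Fin s) (hP : ((F.image (trc R a)).card : ℝ) ≤ P) :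
    ((F.card : ℝ) - P) * δ / 2 ≤ ∑ x, dirW R F (Function.update a i x) i := by
  set cl : ι → Finset (Fin s) := fun j => (trc R a j).erase i with hcl
  have hcard : ((F.image cl).card : ℝ) ≤ P := by
    refine le_trans ?_ hP
    have : F.image cl = (F.image (trc R a)).image (fun q => q.erase i) := by
      rw [Finset.image_image]; rfl
    rw [this]
    exact_mod_cast Finset.card_image_le
  have hmem : ∀ x j i', i' ∈ trc R (Function.update a i x) j ↔
      (i' = i ∧ R j x) ∨ (i' ≠ i ∧ i' ∈ trc R a j) := by
    intro x j i'
    rw [mem_trc, mem_trc]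
    by_cases h : i' = i
    · subst h; simp
    · simp [h]
  have hsub : F.image cl ⊆ ((Finset.univ : Finset (Fin s)).erase i).powerset := by
    intro q hq
    obtain ⟨j, _, rfl⟩ := Finset.mem_image.mp hq
    rw [Finset.mem_powerset]
    exact Finset.erase_subset_erase _ (Finset.subset_univ _)
  have h1 : ∀ x, ∑ q ∈ F.image cl,
      min (((F.filter fun j => cl j = q).filter fun j => ¬ R j x).card : ℝ)
        (((F.filter fun j => cl j = q).filter fun j => R j x).card : ℝ)
      ≤ dirW R F (Function.update a i x) i := by
    intro x
    unfold dirW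
    refine le_trans (Finset.sum_le_sum fun q hq => ?_)
      (Finset.sum_le_sum_of_subset_of_nonneg hsub fun _ _ _ => by positivity)
    have hiq : i ∉ q := by
      obtain ⟨j, _, rfl⟩ := Finset.mem_image.mp hq
      simp [hcl]
    refine min_le_min ?_ ?_
    · refine Nat.cast_le.mpr (Finset.card_le_card fun j hj => ?_)
      simp only [Finset.mem_filter] at hj ⊢
      refine ⟨hj.1.1, ?_⟩
      ext i'
      rw [hmem, ← hj.1.2]
      simp [hcl, hj.2]
    · refine Nat.cast_le.mpr (Finset.card_le_card fun j hj => ?_)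
      simp only [Finset.mem_filter] at hj ⊢
      refine ⟨hj.1.1, ?_⟩
      ext i'
      rw [hmem, ← hj.1.2]
      simp [hcl, hj.2]
  refine le_trans ?_ (Finset.sum_le_sum fun x _ => h1 x)
  rw [Finset.sum_comm]
  have h2 : ∑ q ∈ F.image cl, (((F.filter fun j => cl j = q).card : ℝ) - 1) * δ / 2 ≤ _ :=
    Finset.sum_le_sum fun q _ => class_bound R (F.filter fun j => cl j = q) δ hδ
      (fun j hj j' hj' => hsep j (Finset.mem_of_mem_filter _ hj) j' (Finset.mem_of_mem_filter _ hj'))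
  refine le_trans ?_ h2
  rw [← Finset.sum_div, ← Finset.sum_mul, Finset.sum_sub_distrib, ← Nat.cast_sum,
    ← Finset.card_eq_sum_card_image]
  simp only [Finset.sum_const, nsmul_eq_mul, mul_one]
  gcongr

theorem sum_update {α : Type*} [Fintype α] {s : ℕ} (i : Fin s) (g : (Fin s → α) → ℝ) :
    ∑ a : Fin s → α, ∑ x, g (Function.update a i x) = Fintype.card α * ∑ a, g a := by
  classical
  have h : ∑ p : (Fin s → α) × α, g (Function.update p.1 i p.2)
      = ∑ p : (Fin s → α) × α, g p.1 := by
    refine Finset.sum_nbij' (fun p => (Function.update p.1 i p.2, p.1 i))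
      (fun p => (Function.update p.1 i p.2, p.1 i)) ?_ ?_ ?_ ?_ ?_ <;> simp
  rw [Fintype.sum_prod_type, Fintype.sum_prod_type] at h
  rw [h]
  simp [Finset.mul_sum]

/-- Haussler's packing lemma -/
theorem haussler {ι α : Type*} [Fintype α] (R : ι → α → Prop) (F : Finset ι) (d : ℕ)
    (hd : 1 ≤ d)
    (hvc : ∀ S : Finset α, (∀ U ⊆ S, ∃ j ∈ F, ∀ x ∈ S, R j x ↔ x ∈ U) → S.card ≤ d)
    (δ : ℝ) (hδ : 0 < δ) (hδN : δ ≤ Fintype.card α)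
    (hsep : ∀ j ∈ F, ∀ j' ∈ F, j ≠ j' → δ ≤ ({x | ¬ (R j x ↔ R j' x)} : Set α).ncard) :
    (F.card : ℝ) ≤ (30 * Fintype.card α / δ) ^ d := by
  classical
  set N : ℝ := (Fintype.card α : ℝ) with hN
  have hN0 : 0 < N := hδ.trans_le hδN
  have hd0 : (0:ℝ) < d := by exact_mod_cast hd
  have hd1 : (1:ℝ) ≤ d := by exact_mod_cast hd
  set s : ℕ := ⌈4 * d * N / δ⌉₊ with hs
  have hs1 : 4 * d * N / δ ≤ s := Nat.le_ceil _
  have hs2 : (s:ℝ) < 4 * d * N / δ + 1 := Nat.ceil_lt_add_one (by positivity)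
  have hr : 1 ≤ N / δ := by rwa [one_le_div hδ]
  have e0 : 4 * d * N / δ = 4 * d * (N / δ) := by ring
  rw [e0] at hs1 hs2
  have hds : d ≤ s := by
    have : (d:ℝ) ≤ s := by nlinarith
    exact_mod_cast this
  set P : ℝ := ∑ k ∈ Finset.Iic d, (s.choose k : ℝ) with hP
  have hPle := choose_sum_le d s hd hds
  have hP' : ∀ a : Fin s → α, ((F.image (trc R a)).card : ℝ) ≤ P := fun a => by
    have := card_trc_le R F d hvc a
    rw [hP]; exact_mod_cast this
  have hsep' : ∀ j ∈ F, ∀ j' ∈ F, j ≠ j' →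
      δ ≤ ((Finset.univ.filter fun x => ¬ (R j x ↔ R j' x)).card : ℝ) := by
    intro j hj j' hj' hne
    refine (hsep j hj j' hj' hne).trans (le_of_eq ?_)
    rw [Set.ncard_eq_toFinset_card']
    simp
  have up : ∑ a : Fin s → α, ∑ i, dirW R F a i ≤ ∑ a : Fin s → α, (d * F.card : ℝ) :=
    Finset.sum_le_sum fun a _ => sum_dirW_le R F d hvc a
  have low : ∀ i : Fin s, ∑ a : Fin s → α, ((F.card : ℝ) - P) * δ / 2
      ≤ N * ∑ a : Fin s → α, dirW R F a i := by
    intro i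
    rw [hN, ← sum_update i (fun a => dirW R F a i)]
    exact Finset.sum_le_sum fun a _ => dir_lower R F δ P hδ.le hsep' a i (hP' a)
  have low2 := Finset.sum_le_sum fun i (_ : i ∈ (Finset.univ : Finset (Fin s))) => low i
  rw [← Finset.mul_sum, Finset.sum_comm (s := Finset.univ (α := Fin s))
    (f := fun i a => dirW R F a i)] at low2
  have tot := low2.trans (mul_le_mul_of_nonneg_left up hN0.le)
  simp only [Finset.sum_const, nsmul_eq_mul, Finset.card_univ, Fintype.card_fin] at tot
  have hM : (0:ℝ) < Fintype.card (Fin s → α) := by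
    have : Nonempty α := Fintype.card_pos_iff.mp (by rw [hN] at hN0; exact_mod_cast hN0)
    exact_mod_cast Fintype.card_pos
  have tot2 : (s:ℝ) * ((F.card - P) * δ / 2) ≤ N * (d * F.card) := by
    refine le_of_mul_le_mul_left ?_ hM
    linarith
  have hFP : (F.card : ℝ) ≤ 2 * P := by
    by_contra hcon
    push Not at hcon
    have h4 : 4 * d * N ≤ s * δ := by
      have := mul_le_mul_of_nonneg_right hs1 hδ.le
      field_simp at this
      linarith
    have hFpos : (0:ℝ) < F.card := by
      have : 0 ≤ P := by rw [hP]; positivity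
      linarith
    have h5 : 4 * d * N * ((F.card - P)/2) ≤ s * δ * ((F.card - P)/2) :=
      mul_le_mul_of_nonneg_right h4 (by
        have : 0 ≤ P := by rw [hP]; positivity
        linarith)
    have h6 : 0 < d * N := by positivity
    nlinarith
  have he := Real.exp_one_lt_d9
  have hb : Real.exp 1 * s / d ≤ 15 * (N / δ) := by
    rw [div_le_iff₀ hd0]
    have : (s:ℝ) ≤ 5 * d * (N/δ) := by nlinarith
    nlinarith [Real.exp_pos 1]
  calc (F.card : ℝ) ≤ 2 * P := hFP
    _ ≤ 2 ^ d * (15 * (N/δ)) ^ d := by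
        have h2 : (2:ℝ) ≤ 2 ^ d := le_self_pow₀ (by norm_num) (by omega)
        have hPP : P ≤ (15 * (N/δ))^d := hPle.trans (by gcongr)
        gcongr
    _ = _ := by rw [← mul_pow]; congr 1; ring

section grp
variable {G : Type*} [Group G] {A : Set G}

theorem smul_symmDiff_ncard (x : G) (S T : Set G) : ((x • S) ∆ (x • T)).ncard = (S ∆ T).ncard := by
  rw [← Set.smul_set_symmDiff, Set.ncard_smul_set]

theorem stabL_inv (A : Set G) (N : ℝ) : (stabL A N)⁻¹ = stabL A N := by
  ext x
  simp only [Set.mem_inv, stabL, Set.mem_ofPred_eq]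
  rw [← smul_symmDiff_ncard x (x⁻¹ • A) A, smul_inv_smul, symmDiff_comm]

theorem stabL_one (A : Set G) {N : ℝ} (hN : 0 ≤ N) : (1:G) ∈ stabL A N := by
  simpa [stabL] using hN

theorem stabL_mul (hA : A.Finite) {M N : ℝ} : stabL A M * stabL A N ⊆ stabL A (M + N) := by
  rintro _ ⟨x, hx, y, hy, rfl⟩
  simp only [stabL, Set.mem_ofPred_eq] at *
  have h1 : (((x * y) • A) ∆ A) ⊆ (((x * y) • A) ∆ (x • A)) ∪ ((x • A) ∆ A) :=
    symmDiff_triangle _ _ _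
  have hf : ∀ a b : G, ((a • A) ∆ (b • A)).Finite := fun a b =>
    (hA.smul_set (a := a)).symmDiff (hA.smul_set (a := b))
  have h2 := (Set.ncard_le_ncard h1 (by
    have := hf x 1
    rw [one_smul] at this
    exact (hf _ _).union this)).trans (Set.ncard_union_le _ _)
  rw [mul_smul, smul_symmDiff_ncard] at h2
  have h3 : (((x • y • A) ∆ A).ncard : ℝ) ≤ ((y • A) ∆ A).ncard + ((x • A) ∆ A).ncard := by
    exact_mod_cast h2
  rw [mul_smul]
  linarith

theorem stabL_pow (hA : A.Finite) {N : ℝ} (j : ℕ) : (stabL A N) ^ j ⊆ stabL A (j * N) := by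
  induction j with
  | zero => 
    rw [pow_zero]
    intro x hx
    rw [Set.mem_one] at hx
    subst hx
    exact stabL_one _ (by simp)
  | succ j ih =>
    rw [pow_succ]
    refine (Set.mul_subset_mul_right ih).trans ((stabL_mul hA).trans (le_of_eq ?_))
    congr 1; push_cast; ring

theorem stabL_mono {M N : ℝ} (h : M ≤ N) : stabL A M ⊆ stabL A N :=
  fun _ hx => le_trans hx h

theorem stabL_subset (hA : A.Finite) (hne : A.Nonempty) {δ : ℝ} (hδ : δ ≤ 1) :
    stabL A (δ * A.ncard) ⊆ A * A⁻¹ := by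
  intro x hx
  simp only [stabL, Set.mem_ofPred_eq] at hx
  by_contra hcon
  have hdis : Disjoint (x • A) A := by
    rw [Set.disjoint_left]
    rintro _ ⟨a, ha, rfl⟩ hb
    exact hcon ⟨x * a, hb, a⁻¹, by simpa using ha, by simp⟩
  have hun : (x • A) ∆ A = (x • A) ∪ A := hdis.symmDiff_eq_sup
  rw [hun, Set.ncard_union_eq hdis hA.smul_set hA,
    Set.ncard_smul_set] at hx
  have : (0:ℝ) < A.ncard := by exact_mod_cast (Set.ncard_pos hA).mpr hne
  push_cast at hx
  nlinarith

theorem stabL_large (hA : A.Finite) (hAne : A.Nonempty)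
    (d : ℕ) (hd : vcDim (leftFam A A⁻¹) = (d : ℕ∞)) (hd1 : 1 ≤ d) {δ : ℝ} (h0 : 0 < δ)
    (h1 : δ ≤ 1) :
    (A.ncard : ℝ) ≤ (30 * (((A⁻¹ * A).ncard : ℝ) / A.ncard) / δ) ^ d *
      (stabL A (δ * A.ncard)).ncard := by
  classical
  have hAc : (0:ℝ) < A.ncard := by exact_mod_cast (Set.ncard_pos hA).mpr hAne
  have hXf : (A⁻¹ * A).Finite := hA.inv.mul hA
  have hStf : (stabL A (δ * A.ncard)).Finite :=
    (hA.mul hA.inv).subset (stabL_subset hA hAne h1)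
  -- maximal separated subset
  let good : Finset G → Prop := fun F =>
    ∀ a ∈ F, ∀ b ∈ F, a ≠ b → δ * A.ncard ≤ ((a⁻¹ • A) ∆ (b⁻¹ • A)).ncard
  have hex : (hA.toFinset.powerset.filter good).Nonempty :=
    ⟨∅, by simp [good]⟩
  obtain ⟨F, hF, hmax⟩ := Finset.exists_max_image _ Finset.card hex
  rw [Finset.mem_filter, Finset.mem_powerset] at hF
  obtain ⟨hFA, hFg⟩ := hF
  have hFA' : ∀ a ∈ F, a ∈ A := fun a ha => by simpa using hFA ha
  have hcov : A ⊆ (stabL A (δ * A.ncard))⁻¹ * (F : Set G) := by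
    intro b hb
    by_cases hbF : b ∈ F
    · exact ⟨1, by simpa using stabL_one A (by positivity), b, hbF, by simp⟩
    have hng : ¬ good (insert b F) := by
      intro hg
      have := hmax (insert b F) (by
        rw [Finset.mem_filter, Finset.mem_powerset]
        exact ⟨Finset.insert_subset (by simpa using hb) hFA, hg⟩)
      rw [Finset.card_insert_of_notMem hbF] at this
      omega
    have : ∃ a ∈ F, ((a⁻¹ • A) ∆ (b⁻¹ • A)).ncard < δ * A.ncard := by
      by_contra hcon
      push Not at hcon
      refine hng fun a ha c hc hac => ?_
      rw [Finset.mem_insert] at ha hc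
      rcases ha with rfl | ha <;> rcases hc with rfl | hc
      · exact absurd rfl hac
      · rw [symmDiff_comm]; exact hcon c hc
      · exact hcon a ha
      · exact hFg a ha c hc hac
    obtain ⟨a, ha, hlt⟩ := this
    refine ⟨b * a⁻¹, ?_, a, ha, by simp⟩
    simp only [Set.mem_inv, stabL, Set.mem_ofPred_eq]
    rw [← smul_symmDiff_ncard a, smul_inv_smul, smul_smul, symmDiff_comm] at hlt
    simpa using hlt.le
  have hcard : (A.ncard : ℝ) ≤ F.card * (stabL A (δ * A.ncard)).ncard := by
    have h2 := Set.ncard_le_ncard hcov (hStf.inv.mul F.finite_toSet)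
    have h3 : ((stabL A (δ * A.ncard))⁻¹ * (F : Set G)).ncard ≤
        (stabL A (δ * A.ncard))⁻¹.ncard * (F : Set G).ncard := by
      rw [← Nat.card_coe_set_eq, ← Nat.card_coe_set_eq, ← Nat.card_coe_set_eq]
      exact Set.natCard_mul_le
    rw [stabL_inv] at h2 h3
    rw [Set.ncard_coe_finset] at h3
    have := h2.trans h3
    rw [mul_comm]
    exact_mod_cast this
  refine hcard.trans (mul_le_mul_of_nonneg_right ?_ (by positivity))
  haveI : Fintype ↥(A⁻¹ * A) := hXf.fintype
  have hXc : (Fintype.card ↥(A⁻¹ * A) : ℝ) = ((A⁻¹ * A).ncard : ℝ) := by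
    rw [← Nat.card_coe_set_eq, Nat.card_eq_fintype_card]
  have hsubX : ∀ a ∈ A, a⁻¹ • A ⊆ A⁻¹ * A := by
    rintro a ha _ ⟨b, hb, rfl⟩
    exact ⟨a⁻¹, by simpa using ha, b, hb, rfl⟩
  have hle : (A.ncard : ℝ) ≤ ((A⁻¹ * A).ncard : ℝ) := by
    obtain ⟨a, ha⟩ := hAne
    have := Set.ncard_le_ncard (hsubX a ha) hXf
    rw [Set.ncard_smul_set] at this
    exact_mod_cast this
  have hH := haussler (fun (a : G) (x : ↥(A⁻¹ * A)) => (x : G) ∈ a⁻¹ • A) F d hd1 (by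
      intro S hS
      have hsh : Shatters (leftFam A A⁻¹)
          ((S.map (Function.Embedding.subtype _) : Finset G) : Set G) := by
        intro T hT
        obtain ⟨j, hj, hjx⟩ := hS (S.filter fun x => (x : G) ∈ T) (Finset.filter_subset _ _)
        refine ⟨j⁻¹ • A, ⟨j⁻¹, by simpa using hFA' j hj, rfl⟩, ?_⟩
        ext g
        constructor
        · rintro ⟨hg, hg2⟩
          rw [Finset.mem_coe, Finset.mem_map] at hg
          obtain ⟨x, hx, rfl⟩ := hg
          exact (Finset.mem_filter.mp ((hjx x hx).mp hg2)).2
        · intro hg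
          have hg' := hT hg
          refine ⟨hg', ?_⟩
          rw [Finset.mem_coe, Finset.mem_map] at hg'
          obtain ⟨x, hx, rfl⟩ := hg'
          exact (hjx x hx).mpr (Finset.mem_filter.mpr ⟨hx, hg⟩)
      have := le_iSup₂ (f := fun (S : Finset G) (_ : Shatters (leftFam A A⁻¹) ↑S) =>
        (S.card : ℕ∞)) _ hsh
      change _ ≤ vcDim (leftFam A A⁻¹) at this
      rw [hd, Finset.card_map] at this
      exact_mod_cast this)
    (δ * A.ncard) (by positivity) (by rw [hXc]; nlinarith) (by
      intro j hj j' hj' hne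
      refine (hFg j hj j' hj' hne).trans (le_of_eq ?_)
      norm_cast
      rw [← Set.ncard_image_of_injective _ Subtype.val_injective]
      congr 1
      ext g
      simp only [Set.mem_image, Set.mem_ofPred_eq, Set.mem_symmDiff]
      constructor
      · intro h
        have hg : g ∈ A⁻¹ * A := by
          rcases h with h | h
          · exact hsubX j (hFA' j hj) h.1
          · exact hsubX j' (hFA' j' hj') h.1
        exact ⟨⟨g, hg⟩, by simp only; tauto, rfl⟩
      · rintro ⟨x, hx, rfl⟩
        tauto)
  rw [hXc] at hH
  refine hH.trans (le_of_eq ?_)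
  congr 1
  field_simp

end grp

/-- Lemma 5.1 of the paper, case (2): with `d = VC^ℓ_{A⁻¹}(A) ≥ 1`,
`k = |A⁻¹A|/|A|` and `m = |AA⁻¹|/|A|`, for integers `n ≥ u ≥ 2` and `ε ∈ (0,1)` there is a
symmetric `B` with `|B^u| ≤ u^{d(d+1)}|B|`, `B^n ⊆ St^ℓ_ε(A)`, and
`|A| ≤ m^{1/d}(30kn/ε)^{d+1}|B|`. -/
theorem afz_trick' {G : Type*} [Group G] (A : Set G)
    (hA : A.Finite) (hAne : A.Nonempty)
    (d : ℕ) (hd : vcDim (leftFam A A⁻¹) = (d : ℕ∞)) (hd1 : 1 ≤ d)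
    (n u : ℕ) (hu : 2 ≤ u) (hun : u ≤ n)
    (ε : ℝ) (hε0 : 0 < ε) (hε1 : ε < 1) :
    ∃ B : Set G, B.Finite ∧ B⁻¹ = B ∧ (1 : G) ∈ B ∧
      ((B ^ u).ncard : ℝ) ≤ (u : ℝ) ^ (d * (d + 1)) * B.ncard ∧
      B ^ n ⊆ stL A ε ∧
      (A.ncard : ℝ) ≤ (((A * A⁻¹).ncard : ℝ) / A.ncard) ^ ((d : ℝ)⁻¹) *
        (30 * (((A⁻¹ * A).ncard : ℝ) / A.ncard) * n / ε) ^ (d + 1) * B.ncard := by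
  classical
  have hAc : (0:ℝ) < A.ncard := by exact_mod_cast (Set.ncard_pos hA).mpr hAne
  have hu2 : (2:ℝ) ≤ u := by exact_mod_cast hu
  have hunR : (u:ℝ) ≤ n := by exact_mod_cast hun
  have hu0 : (0:ℝ) < u := by linarith
  have hn0 : (0:ℝ) < n := by linarith
  have hd0 : d ≠ 0 := by omega
  set m : ℝ := ((A * A⁻¹).ncard : ℝ) / A.ncard with hm
  set k : ℝ := ((A⁻¹ * A).ncard : ℝ) / A.ncard with hk
  have hk0 : 0 ≤ k := by positivity
  have hm0 : 0 ≤ m := by positivity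
  set K : ℝ := (u : ℝ) ^ (d * (d + 1)) with hK
  have hK1 : 2 ≤ K := hu2.trans (le_self_pow₀ (by linarith) (by positivity))
  -- `p t` is the size of the stabilizer at scale `(ε/n) u / u^t`
  set δ : ℕ → ℝ := fun t => ε / n * u / u ^ t with hδ
  set p : ℕ → ℝ := fun t => ((stabL A (δ t * A.ncard)).ncard : ℝ) with hp
  have hδ0 : ∀ t, 0 < δ t := fun t => by positivity
  have hδ1 : ∀ t, δ t ≤ 1 := fun t => by
    have h1 : ε / n * u ≤ 1 := by
      rw [div_mul_eq_mul_div, div_le_one hn0]; nlinarith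
    have h2 : (1:ℝ) ≤ u ^ t := one_le_pow₀ (by linarith)
    simp only [hδ]
    rw [div_le_one (by positivity)]
    linarith
  have hfin : ∀ t, (stabL A (δ t * A.ncard)).Finite := fun t =>
    (hA.mul hA.inv).subset (stabL_subset hA hAne (hδ1 t))
  have hp1 : ∀ t, 1 ≤ p t := fun t => by
    have : 0 < (stabL A (δ t * A.ncard)).ncard :=
      (Set.ncard_pos (hfin t)).mpr ⟨1, stabL_one A (mul_nonneg (hδ0 t).le hAc.le)⟩
    simp only [hp]
    exact_mod_cast this
  have hp0 : p 0 ≤ m * A.ncard := by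
    rw [hm, div_mul_cancel₀ _ hAc.ne']
    simp only [hp]
    exact_mod_cast Set.ncard_le_ncard (stabL_subset hA hAne (hδ1 0)) (hA.mul hA.inv)
  have hchain : ∀ t, (∀ i < t, K * p (i+1) < p i) → K ^ t * p t ≤ m * A.ncard := by
    intro t
    induction t with
    | zero => intro _; simpa using hp0
    | succ t ih =>
      intro h
      have h1 := ih fun i hi => h i (by omega)
      have h2 := h t (by omega)
      have h3 : K ^ t * (K * p (t+1)) ≤ K ^ t * p t := by gcongr
      rw [pow_succ]; linarith
  have hex : ∃ t, p t ≤ K * p (t+1) := by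
    by_contra hcon
    push Not at hcon
    obtain ⟨t, ht⟩ := pow_unbounded_of_one_lt (m * A.ncard) (by linarith : (1:ℝ) < K)
    have h1 := hchain t fun i _ => hcon i
    have h2 : K ^ t * 1 ≤ K ^ t * p t := by gcongr; exact hp1 t
    linarith
  obtain ⟨t, ht, htmin⟩ : ∃ t, p t ≤ K * p (t+1) ∧ ∀ i < t, K * p (i+1) < p i :=
    ⟨Nat.find hex, Nat.find_spec hex, fun i hi => not_le.mp (Nat.find_min hex hi)⟩
  have hδs : δ t = u * δ (t+1) := by
    simp only [hδ, pow_succ]; field_simp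
  have hδn : n * δ (t+1) = ε / u ^ t := by
    simp only [hδ, pow_succ]; field_simp
  refine ⟨stabL A (δ (t+1) * A.ncard), hfin _, stabL_inv _ _,
    stabL_one A (mul_nonneg (hδ0 _).le hAc.le), ?_, ?_, ?_⟩
  · refine le_trans ?_ ht
    simp only [hp]
    have := stabL_pow hA (N := δ (t+1) * A.ncard) u
    rw [← mul_assoc, ← hδs] at this
    exact_mod_cast Set.ncard_le_ncard this (hfin t)
  · refine (stabL_pow hA n).trans (stabL_mono ?_)
    rw [← mul_assoc, hδn]
    gcongr
    exact div_le_self hε0.le (one_le_pow₀ (by linarith))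
  · set Y : ℝ := 30 * k * n / ε with hY
    have hY0 : 0 ≤ Y := by positivity
    have L1 := stabL_large hA hAne d hd hd1 (hδ0 (t+1)) (hδ1 (t+1))
    have L2 := stabL_large hA hAne d hd hd1 (hδ0 t) (hδ1 t)
    rw [← hk] at L1 L2
    have E1 : 30 * k / δ (t+1) = Y * u ^ t := by
      simp only [hδ, hY, pow_succ]; field_simp
    have E2 : 30 * k / δ t = Y * u ^ t / u := by
      simp only [hδ, hY]; field_simp
    rw [E1] at L1
    rw [E2] at L2
    have C := hchain t htmin
    have hut : (0:ℝ) < u ^ t := by positivity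
    have h1 : K ^ t * A.ncard ≤ (Y * u ^ t) ^ d * (m * A.ncard) := by
      calc K ^ t * A.ncard ≤ K ^ t * ((Y * u ^ t / u) ^ d * p t) := by gcongr
        _ = (Y * u ^ t / u) ^ d * (K ^ t * p t) := by ring
        _ ≤ (Y * u ^ t) ^ d * (m * A.ncard) := by
            gcongr
            exact div_le_self (by positivity) (by linarith)
    have h2 : K ^ t ≤ (Y * u ^ t) ^ d * m := by
      refine le_of_mul_le_mul_right ?_ hAc
      linarith
    have h3 : ((u:ℝ) ^ (t * d)) ^ d ≤ m * Y ^ d := by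
      have e : K ^ t = ((u:ℝ) ^ (t * d)) ^ d * (u ^ t) ^ d := by
        rw [hK, ← pow_mul, ← pow_mul, ← pow_mul, ← pow_add]; congr 1; ring
      rw [e, mul_pow] at h2
      refine le_of_mul_le_mul_right ?_ (pow_pos hut d)
      linarith
    have h4 : (u:ℝ) ^ (t * d) ≤ m ^ ((d:ℝ)⁻¹) * Y := by
      refine le_of_pow_le_pow_left₀ hd0 (by positivity) ?_
      rw [mul_pow, Real.rpow_inv_natCast_pow hm0 hd0]
      exact h3
    calc (A.ncard : ℝ) ≤ (Y * u ^ t) ^ d * p (t+1) := L1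
      _ = Y ^ d * u ^ (t * d) * p (t+1) := by rw [mul_pow, pow_mul]
      _ ≤ Y ^ d * (m ^ ((d:ℝ)⁻¹) * Y) * p (t+1) := by gcongr
      _ = _ := by rw [pow_succ]; ring
end
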